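/- Let X ⊂ ℝ^n be a nonempty closed semi-algebraic set of dimension d. Then the limit lim_{R→∞} vol_d(X ∩ B_R)/R^d exists and is finite, where vol_d denotes d-dimensional Hausdorff measure; in particular vol(X ∩ B_R) grows at most polynomially of degree d in R. -/

import Mathlib

open MeasureTheory Metric Set Filter
open scoped ENNReal Topology

/-- Semi-algebraic subsets of `ι → ℝ`: the smallest collection of sets containing the
basic sets `{x | p(x) = 0}` and `{x | p(x) > 0}` for real polynomials `p`, and closed
under finite unions and intersections. -/
inductive IsSemialgebraic {ι : Type*} [Fintype ι] : Set (ι → ℝ) → Prop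
  | eq (p : MvPolynomial ι ℝ) : IsSemialgebraic {x | MvPolynomial.eval x p = 0}
  | lt (p : MvPolynomial ι ℝ) : IsSemialgebraic {x | 0 < MvPolynomial.eval x p}
  | union {s t : Set (ι → ℝ)} : IsSemialgebraic s → IsSemialgebraic t →
      IsSemialgebraic (s ∪ t)
  | inter {s t : Set (ι → ℝ)} : IsSemialgebraic s → IsSemialgebraic t →
      IsSemialgebraic (s ∩ t)

/-- A subset of euclidean space `ℝ^n` is semi-algebraic. -/
def IsSemialgebraicE {n : ℕ} (s : Set (EuclideanSpace ℝ (Fin n))) : Prop :=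
  IsSemialgebraic {x : Fin n → ℝ | (EuclideanSpace.equiv (Fin n) ℝ).symm x ∈ s}

/-!
Everything is done for all semialgebraic subsets of a given set at once, by noetherian induction on
the vanishing ideal. If the ideal is not prime, the set is a union of two subsets with larger
vanishing ideals. If it is prime, a maximal-minor argument shows that at a generic point the Zariski
tangent space is a graph with slopes at most `1` over the coordinates in some `J` that is a
transcendence basis of the function field; there the other coordinates satisfy separable polynomial
equations over those in `J`. Subdividing the generic points by slope with a finite net gives pieces
that are locally graphs over `J`, as close to linear graphs as desired; the remaining points have a
larger vanishing ideal.

On such a piece, projection along the linear graph distorts volume by a factor close to `1`, so the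
volume in the ball of radius `R` is, up to this factor and after rescaling, the integral over a
fixed ball of the number of points of the piece above `R • x` in the ball of radius `R`. For fixed
`x`, the coordinates of these points are roots of polynomials whose coefficients are polynomials in
`R`, so this number is eventually constant, and it is bounded by the degrees of the equations.
Dominated convergence gives a limit up to a factor `C`, for every `C > 1`.
-/

open scoped NNReal Pointwise

section EventuallyConst

variable {α β κ : Type*} {l : Filter α}

lemma eventuallyConst_pi [Finite κ] [Nonempty β] {f : κ → α → β}
    (h : ∀ k, EventuallyConst (f k) l) : EventuallyConst (fun a k => f k a) l := by
  choose c hc using fun k => (h k).eventuallyEq_const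
  refine eventuallyConst_iff_exists_eventuallyEq.2 ⟨c, ?_⟩
  filter_upwards [eventually_all.2 hc] with a ha using funext ha

lemma eventuallyConst_forall [Finite κ] {p : κ → α → Prop}
    (h : ∀ k, EventuallyConst (p k) l) : EventuallyConst (fun a => ∀ k, p k a) l :=
  (eventuallyConst_pi h).comp fun q : κ → Prop => ∀ k, q k

lemma eventuallyConst_encard {A : α → Set β} {T : Set (α → β)} (hT : T.Finite)
    (hcover : ∀ᶠ a in l, ∀ y ∈ A a, ∃ t ∈ T, t a = y)
    (hmem : ∀ t ∈ T, EventuallyConst (fun a => t a ∈ A a) l)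
    (heq : ∀ t ∈ T, ∀ t' ∈ T, EventuallyConst (fun a => t a = t' a) l) :
    EventuallyConst (fun a => (A a).encard) l := by
  have : Finite T := hT
  have hM := eventuallyConst_pi fun t : T => hmem t t.2
  have hE := eventuallyConst_pi fun t : T => eventuallyConst_pi fun t' : T => heq t t.2 t' t'.2
  refine (hM.comp₂ (fun M E => (E '' {t : T | M t}).encard) hE).congr ?_
  filter_upwards [hcover] with a ha
  have hinj : InjOn (fun y (t : T) => y = t.1 a) (A a) := by
    intro y hy z _ hyz
    obtain ⟨t, ht, rfl⟩ := ha y hy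
    exact ((congrFun hyz ⟨t, ht⟩).mp rfl).symm
  rw [← hinj.encard_image]
  congr 1
  ext e
  constructor
  · rintro ⟨t, ht, rfl⟩
    exact ⟨t.1 a, ht, rfl⟩
  · rintro ⟨y, hy, rfl⟩
    obtain ⟨t, ht, rfl⟩ := ha y hy
    exact ⟨⟨t, ht⟩, hy, rfl⟩

lemma eventually_atTop_eventually_nhds {p : ℝ → Prop} (h : ∀ᶠ s in atTop, p s) :
    ∀ᶠ s in atTop, ∀ᶠ t in 𝓝 s, p t := by
  obtain ⟨s₀, hs₀⟩ := h.exists_forall_of_atTop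
  filter_upwards [eventually_gt_atTop s₀] with s hs
  filter_upwards [lt_mem_nhds hs] with t ht using hs₀ t ht.le

end EventuallyConst

section EvalEval

open Polynomial

variable (P : ℝ[X][X])

lemma continuous_evalEval_right (s : ℝ) : Continuous fun y => P.evalEval s y := by
  simp_rw [← map_evalRingHom_eval]
  exact Polynomial.continuous _

lemma continuous_evalEval_left (y : ℝ) : Continuous fun s => P.evalEval s y :=
  Polynomial.continuous _

lemma deriv_evalEval (s y : ℝ) :
    deriv (fun y => P.evalEval s y) y = P.derivative.evalEval s y := by
  simp_rw [← map_evalRingHom_eval]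
  rw [Polynomial.deriv, derivative_map]

lemma injOn_evalEval {s a b : ℝ} (h : ∀ y ∈ Ioo a b, P.derivative.evalEval s y ≠ 0) :
    InjOn (fun y => P.evalEval s y) (Icc a b) := by
  intro x hx y hy hxy
  by_contra hne
  wlog hlt : x < y generalizing x y
  · exact this hy hx hxy.symm (Ne.symm hne) (lt_of_le_of_ne (not_lt.1 hlt) (Ne.symm hne))
  obtain ⟨c, hc, hc0⟩ := exists_deriv_eq_zero hlt (continuous_evalEval_right P s).continuousOn hxy
  rw [deriv_evalEval] at hc0
  exact h c ⟨hx.1.trans_lt hc.1, hc.2.trans_le hy.2⟩ hc0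

variable {P}

lemma evalEval_mul_neg_of_root {s a b x y z : ℝ}
    (h : ∀ y ∈ Ioo a b, P.derivative.evalEval s y ≠ 0) (hx : a ≤ x) (hxy : x < y) (hyz : y < z)
    (hz : z ≤ b) (hy : P.evalEval s y = 0) : P.evalEval s x * P.evalEval s z < 0 := by
  have hxm : x ∈ Icc a b := ⟨hx, by linarith⟩
  have hym : y ∈ Icc a b := ⟨by linarith, by linarith⟩
  have hzm : z ∈ Icc a b := ⟨by linarith, hz⟩
  rcases (continuous_evalEval_right P s).continuousOn.strictMonoOn_of_injOn_Icc'
    (hxm.1.trans hxm.2) (injOn_evalEval P h) with hm | hm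
  · have hxy' := hm hxm hym hxy
    have hyz' := hm hym hzm hyz
    simp only [hy] at hxy' hyz'
    exact mul_neg_of_neg_of_pos hxy' hyz'
  · have hxy' := hm hxm hym hxy
    have hyz' := hm hym hzm hyz
    simp only [hy] at hxy' hyz'
    exact mul_neg_of_pos_of_neg hxy' hyz'

lemma exists_root_of_evalEval_mul_neg {s a b : ℝ} (hab : a < b)
    (h : P.evalEval s a * P.evalEval s b < 0) : ∃ y ∈ Ioo a b, P.evalEval s y = 0 := by
  have hc := (continuous_evalEval_right P s).continuousOn (s := Icc a b)
  rcases mul_neg_iff.1 h with ⟨ha, hb⟩ | ⟨ha, hb⟩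
  · exact intermediate_value_Ioo' hab.le hc ⟨hb, ha⟩
  · exact intermediate_value_Ioo hab.le hc ⟨ha, hb⟩

lemma continuousAt_of_evalEval_eq_zero {f g r : ℝ → ℝ} {s : ℝ} (hf : ContinuousAt f s)
    (hg : ContinuousAt g s) (hr : r s ∈ Ioo (f s) (g s)) (hr0 : P.evalEval s (r s) = 0)
    (hd : ∀ y ∈ Ioo (f s) (g s), P.derivative.evalEval s y ≠ 0)
    (huniq : ∀ᶠ t in 𝓝 s, ∀ y ∈ Ioo (f t) (g t), P.evalEval t y = 0 → r t = y) :
    ContinuousAt r s := by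
  rw [Metric.continuousAt_iff']
  intro ε hε
  obtain ⟨a, hfa, har⟩ := exists_between (max_lt hr.1 (sub_lt_self (r s) hε))
  obtain ⟨b, hrb, hbg⟩ := exists_between (lt_min hr.2 (lt_add_of_pos_right (r s) hε))
  obtain ⟨hfa, hεa⟩ := max_lt_iff.1 hfa
  obtain ⟨hbg, hbε⟩ := lt_min_iff.1 hbg
  have hneg : ∀ᶠ t in 𝓝 s, P.evalEval t a * P.evalEval t b < 0 :=
    ((continuous_evalEval_left P a).mul (continuous_evalEval_left P b)).continuousAt.eventually_lt
      continuousAt_const (evalEval_mul_neg_of_root hd hfa.le har hrb hbg.le hr0)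
  filter_upwards [hneg, hf.eventually_lt continuousAt_const hfa,
    continuousAt_const.eventually_lt hg hbg, huniq] with t htneg htf htg htuniq
  obtain ⟨y, hy, hy0⟩ := exists_root_of_evalEval_mul_neg (har.trans hrb) htneg
  rw [htuniq y ⟨htf.trans hy.1, hy.2.trans htg⟩ hy0, Real.dist_eq, abs_lt]
  constructor <;> linarith [hy.1, hy.2]

end EvalEval

/-- A function of a real variable which, near `+∞`, is continuous and algebraic over the field of
rational functions. These are the arcs that describe how the points of a semialgebraic family move
when its parameter tends to `+∞`. -/
def EventuallyAlgebraic (g : ℝ → ℝ) : Prop :=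
  (∀ᶠ s in atTop, ContinuousAt g s) ∧
    ∃ Q : Polynomial (Polynomial ℝ), Q ≠ 0 ∧ ∀ᶠ s in atTop, Q.evalEval s (g s) = 0

namespace EventuallyAlgebraic

open Polynomial

variable {f g : ℝ → ℝ}

/-- Germs at `+∞` as an algebra over the polynomial functions. -/
@[reducible] noncomputable def germAlgebra : Algebra ℝ[X] (Germ (atTop : Filter ℝ) ℝ) :=
  RingHom.toAlgebra
    { toFun := fun p => ↑fun s => p.eval s
      map_one' := by simp; rfl
      map_mul' := fun p q => by simp; rfl
      map_zero' := by simp; rfl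
      map_add' := fun p q => by simp; rfl }

attribute [local instance] germAlgebra

lemma aeval_germ (g : ℝ → ℝ) (Q : ℝ[X][X]) :
    aeval (g : Germ (atTop : Filter ℝ) ℝ) Q = ↑fun s => Q.evalEval s (g s) := by
  induction Q using Polynomial.induction_on' with
  | add p q hp hq =>
    rw [map_add, hp, hq, ← Germ.coe_add]
    congr 1
    ext s
    simp
  | monomial n a =>
    rw [aeval_monomial]
    change (↑(fun s => a.eval s) : Germ (atTop : Filter ℝ) ℝ) * _ = _
    rw [← Germ.coe_pow, ← Germ.coe_mul]
    congr 1
    ext s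
    simp [evalEval]

lemma isAlgebraic_germ_iff : IsAlgebraic ℝ[X] (g : Germ (atTop : Filter ℝ) ℝ) ↔
    ∃ Q : ℝ[X][X], Q ≠ 0 ∧ ∀ᶠ s in atTop, Q.evalEval s (g s) = 0 := by
  simp only [IsAlgebraic, aeval_germ]
  exact exists_congr fun Q => and_congr_right fun _ => Germ.coe_eq

protected lemma add (hf : EventuallyAlgebraic f) (hg : EventuallyAlgebraic g) :
    EventuallyAlgebraic fun s => f s + g s :=
  ⟨by filter_upwards [hf.1, hg.1] with s using ContinuousAt.add,
    isAlgebraic_germ_iff.1 ((isAlgebraic_germ_iff.2 hf.2).add (isAlgebraic_germ_iff.2 hg.2))⟩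

protected lemma mul (hf : EventuallyAlgebraic f) (hg : EventuallyAlgebraic g) :
    EventuallyAlgebraic fun s => f s * g s :=
  ⟨by filter_upwards [hf.1, hg.1] with s using ContinuousAt.mul,
    isAlgebraic_germ_iff.1 ((isAlgebraic_germ_iff.2 hf.2).mul (isAlgebraic_germ_iff.2 hg.2))⟩

protected lemma neg (hf : EventuallyAlgebraic f) : EventuallyAlgebraic fun s => -f s :=
  ⟨by filter_upwards [hf.1] with s using ContinuousAt.neg,
    isAlgebraic_germ_iff.1 (isAlgebraic_germ_iff.2 hf.2).neg⟩

protected lemma sub (hf : EventuallyAlgebraic f) (hg : EventuallyAlgebraic g) :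
    EventuallyAlgebraic fun s => f s - g s := by
  simpa only [sub_eq_add_neg] using hf.add hg.neg

lemma polynomial_div (a : ℝ[X]) {b : ℝ[X]} (hb : b ≠ 0) :
    EventuallyAlgebraic fun s => a.eval s / b.eval s := by
  refine ⟨?_, C b * X - C a, fun h => hb (by simpa using congrArg (coeff · 1) h), ?_⟩
  · filter_upwards [eventually_atTop_not_isRoot b hb] with s hs
    exact a.continuous.continuousAt.div b.continuous.continuousAt hs
  · filter_upwards [eventually_atTop_not_isRoot b hb] with s hs
    simp [evalEval, mul_div_cancel₀ _ (show b.eval s ≠ 0 from hs)]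

lemma polynomial (a : ℝ[X]) : EventuallyAlgebraic fun s => a.eval s := by
  simpa using polynomial_div a one_ne_zero

protected lemma const (a : ℝ) : EventuallyAlgebraic fun _ => a := by
  simpa using polynomial (C a)

protected lemma sum {κ : Type*} (s : Finset κ) {f : κ → ℝ → ℝ}
    (h : ∀ k ∈ s, EventuallyAlgebraic (f k)) : EventuallyAlgebraic (∑ k ∈ s, f k) :=
  Finset.sum_induction f EventuallyAlgebraic (fun _ _ => .add) (.const 0) h

lemma mvPolynomial_eval {ι : Type*} {z : ι → ℝ → ℝ} (hz : ∀ i, EventuallyAlgebraic (z i))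
    (p : MvPolynomial ι ℝ) : EventuallyAlgebraic fun s => MvPolynomial.eval (z · s) p := by
  induction p using MvPolynomial.induction_on with
  | C a => simpa using EventuallyAlgebraic.const a
  | add p q hp hq => simpa using hp.add hq
  | mul_X p i hp => simpa using hp.mul (hz i)

lemma evalEval (hg : EventuallyAlgebraic g) (P : ℝ[X][X]) :
    EventuallyAlgebraic fun s => P.evalEval s (g s) := by
  induction P using Polynomial.induction_on with
  | C a => simpa [Polynomial.evalEval] using polynomial a
  | add p q hp hq => simpa using hp.add hq
  | monomial n a hn => simpa [Polynomial.evalEval, pow_succ, mul_assoc] using hn.mul hg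

-- Dividing an equation of `g` by the powers of its variable leaves one with nonzero constant
-- term, whose solutions stay away from the zeros of `g`.
lemma exists_continuousOn_disjoint_zeros (hg : EventuallyAlgebraic g) :
    ∃ (h : ℝ → ℝ) (s₀ : ℝ), ContinuousOn g (Ici s₀) ∧ ContinuousOn h (Ici s₀) ∧
      (∀ s ≥ s₀, g s = 0 ∨ h s = 0) ∧ ∀ s ≥ s₀, g s = 0 → h s ≠ 0 := by
  obtain ⟨P, hP, hPg⟩ := hg.2
  obtain ⟨Q, hPQ, hQ⟩ := exists_eq_pow_rootMultiplicity_mul_and_not_dvd P hP 0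
  rw [C_0, sub_zero] at hPQ hQ
  have hQ0 : Q.coeff 0 ≠ 0 := fun h => hQ (X_dvd_iff.2 h)
  obtain ⟨s₀, hs₀⟩ := (hg.1.and ((hg.evalEval Q).1.and
    (hPg.and (eventually_atTop_not_isRoot _ hQ0)))).exists_forall_of_atTop
  refine ⟨fun s => Q.evalEval s (g s), s₀, fun s hs => (hs₀ s hs).1.continuousWithinAt,
    fun s hs => (hs₀ s hs).2.1.continuousWithinAt, fun s hs => ?_, fun s hs hgs => ?_⟩
  · have hroot := (hs₀ s hs).2.2.1
    rw [hPQ, evalEval_mul, evalEval_pow, evalEval_X, mul_eq_zero] at hroot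
    exact hroot.imp_left eq_zero_of_pow_eq_zero
  · have hne := (hs₀ s hs).2.2.2
    simpa [hgs, Polynomial.evalEval, ← coeff_zero_eq_eval_zero] using hne

lemma eventuallyConst_sign (hg : EventuallyAlgebraic g) :
    EventuallyConst (fun s => SignType.sign (g s)) atTop := by
  obtain ⟨h, s₀, hgc, hhc, hcover, hdisj⟩ := hg.exists_continuousOn_disjoint_zeros
  have hclosed {u : ℝ → ℝ} (hu : ContinuousOn u (Ici s₀)) : IsClosed (Ici s₀ ∩ u ⁻¹' {0}) :=
    hu.preimage_isClosed_of_isClosed isClosed_Ici isClosed_singleton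
  refine eventuallyConst_iff_exists_eventuallyEq.2 ⟨SignType.sign (g s₀), ?_⟩
  filter_upwards [eventually_ge_atTop s₀] with s hs
  by_cases hzero : ∃ t ≥ s₀, g t = 0
  · obtain ⟨t, ht, hgt⟩ := hzero
    have hall : ∀ u ≥ s₀, g u = 0 := by
      by_contra! hne
      obtain ⟨u, hu, hgu⟩ := hne
      obtain ⟨v, hv, ⟨-, hgv⟩, -, hhv⟩ := isPreconnected_closed_iff.1 isPreconnected_Ici _ _
        (hclosed hgc) (hclosed hhc) (fun v hv => (hcover v hv).imp (⟨hv, ·⟩) (⟨hv, ·⟩))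
        ⟨t, ht, ht, hgt⟩ ⟨u, hu, hu, (hcover u hu).resolve_left hgu⟩
      exact hdisj v hv hgv hhv
    rw [hall s hs, hall s₀ le_rfl]
  · push Not at hzero
    have hivt {a b : ℝ} (ha : a ≥ s₀) (hb : b ≥ s₀) (hga : g a < 0) : ¬ 0 < g b := fun hgb => by
      obtain ⟨c, hc, hgc0⟩ := isPreconnected_Ici.intermediate_value ha hb hgc ⟨hga.le, hgb.le⟩
      exact hzero c hc hgc0
    rcases lt_or_gt_of_ne (hzero s hs) with h1 | h1 <;>
      rcases lt_or_gt_of_ne (hzero s₀ le_rfl) with h2 | h2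
    · rw [sign_neg h1, sign_neg h2]
    · exact absurd h2 (hivt hs le_rfl h1)
    · exact absurd h1 (hivt le_rfl hs h2)
    · rw [sign_pos h1, sign_pos h2]

lemma eventuallyConst_lt (hf : EventuallyAlgebraic f) (hg : EventuallyAlgebraic g) :
    EventuallyConst (fun s => f s < g s) atTop := by
  refine ((hg.sub hf).eventuallyConst_sign.comp (· = 1)).congr (.of_forall fun s => ?_)
  simp [sign_eq_one_iff]

lemma eventuallyConst_le (hf : EventuallyAlgebraic f) (hg : EventuallyAlgebraic g) :
    EventuallyConst (fun s => f s ≤ g s) atTop := by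
  simpa [Function.comp_def] using (hg.eventuallyConst_lt hf).comp Not

lemma eventuallyConst_eq (hf : EventuallyAlgebraic f) (hg : EventuallyAlgebraic g) :
    EventuallyConst (fun s => f s = g s) atTop := by
  simpa [← le_antisymm_iff] using (hf.eventuallyConst_le hg).comp₂ And (hg.eventuallyConst_le hf)

end EventuallyAlgebraic

section Roots

open Polynomial

lemma abs_lt_of_isRoot {p : ℝ[X]} (hp : p ≠ 0) {y : ℝ} (hy : p.IsRoot y) :
    |y| < ∑ i ∈ Finset.range p.natDegree, ((p.coeff i / p.leadingCoeff) ^ 2 + 1) + 1 := by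
  have hle_sq (x : ℝ) : |x| ≤ x ^ 2 + 1 := by nlinarith [sq_abs x, sq_nonneg (|x| - 1)]
  calc |y| = ‖y‖₊ := by simp
    _ < cauchyBound p := NNReal.coe_lt_coe.2 (hy.norm_lt_cauchyBound hp)
    _ ≤ (∑ i ∈ Finset.range p.natDegree, ‖p.coeff i‖₊ : NNReal) / ‖p.leadingCoeff‖₊ + 1 := by
      rw [cauchyBound]
      rw [← NNReal.coe_div, ← NNReal.coe_one, ← NNReal.coe_add, NNReal.coe_le_coe]
      gcongr
      exact Finset.sup_le fun i hi =>
        Finset.single_le_sum (f := fun i => ‖p.coeff i‖₊) (fun _ _ => zero_le) hi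
    _ = ∑ i ∈ Finset.range p.natDegree, |p.coeff i / p.leadingCoeff| + 1 := by
      simp [Finset.sum_div, abs_div]
    _ ≤ _ := by gcongr; exact hle_sq _

namespace EventuallyAlgebraic

lemma exists_abs_root_lt {P : ℝ[X][X]} (hP : P ≠ 0) : ∃ B, EventuallyAlgebraic B ∧
    ∀ᶠ s in atTop, ∀ y, P.evalEval s y = 0 → |y| < B s := by
  have hlead := leadingCoeff_ne_zero.2 hP
  refine ⟨_, ((EventuallyAlgebraic.sum (Finset.range P.natDegree) fun i _ =>
    ((polynomial_div (P.coeff i) hlead).mul (polynomial_div (P.coeff i) hlead)).add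
      (.const 1)).add (.const 1)), ?_⟩
  filter_upwards [eventually_atTop_not_isRoot _ hlead] with s hs y hy
  have hs' : evalRingHom s P.leadingCoeff ≠ 0 := hs
  have hne : P.map (evalRingHom s) ≠ 0 := by
    rw [← leadingCoeff_ne_zero, leadingCoeff_map_of_leadingCoeff_ne_zero _ hs']
    exact hs'
  have hroot := abs_lt_of_isRoot hne (y := y) (by rwa [IsRoot, map_evalRingHom_eval])
  simpa [natDegree_map_of_leadingCoeff_ne_zero _ hs',
    leadingCoeff_map_of_leadingCoeff_ne_zero _ hs', ← sq] using hroot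

variable {P : ℝ[X][X]} {f g : ℝ → ℝ}

lemma exists_root (hP : P ≠ 0) (hf : ∀ᶠ s in atTop, ContinuousAt f s)
    (hg : ∀ᶠ s in atTop, ContinuousAt g s) (hlt : ∀ᶠ s in atTop, f s < g s)
    (hd : ∀ᶠ s in atTop, ∀ y ∈ Ioo (f s) (g s), P.derivative.evalEval s y ≠ 0)
    (hneg : ∀ᶠ s in atTop, P.evalEval s (f s) * P.evalEval s (g s) < 0) :
    ∃ r, EventuallyAlgebraic r ∧
      ∀ᶠ s in atTop, ∀ y ∈ Ioo (f s) (g s), P.evalEval s y = 0 → r s = y := by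
  have hex : ∀ s, ∃ y, (∃ z ∈ Ioo (f s) (g s), P.evalEval s z = 0) →
      y ∈ Ioo (f s) (g s) ∧ P.evalEval s y = 0 := fun s =>
    (em _).elim (fun ⟨y, hy⟩ => ⟨y, fun _ => hy⟩) fun h => ⟨0, fun h' => absurd h' h⟩
  choose r hr using hex
  have hroot : ∀ᶠ s in atTop, r s ∈ Ioo (f s) (g s) ∧ P.evalEval s (r s) = 0 := by
    filter_upwards [hlt, hneg] with s hlt hneg using hr s (exists_root_of_evalEval_mul_neg hlt hneg)
  have huniq : ∀ᶠ s in atTop, ∀ y ∈ Ioo (f s) (g s), P.evalEval s y = 0 → r s = y := by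
    filter_upwards [hd] with s hd y hy hy0
    obtain ⟨hrI, hr0⟩ := hr s ⟨y, hy, hy0⟩
    exact injOn_evalEval P hd (Ioo_subset_Icc_self hrI) (Ioo_subset_Icc_self hy)
      (hr0.trans hy0.symm)
  refine ⟨r, ⟨?_, P, hP, hroot.mono fun s => And.right⟩, huniq⟩
  filter_upwards [hf, hg, hroot, hd, eventually_atTop_eventually_nhds huniq]
    with s hf hg hroot hd huniq
  exact continuousAt_of_evalEval_eq_zero hf hg hroot.1 hroot.2 hd huniq

/-- At the parameter `s` the arcs `f` and `g` enclose no value of an arc of `G` and `P` changes sign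
between them: the situation in which, if all roots of `P'` lie on arcs of `G`, the polynomial `P`
has exactly one root between `f` and `g`. -/
def Separates (P : ℝ[X][X]) (G : Set (ℝ → ℝ)) (f g : ℝ → ℝ) (s : ℝ) : Prop :=
  f s < g s ∧ (∀ h ∈ G, h s ≤ f s ∨ g s ≤ h s) ∧ P.evalEval s (f s) * P.evalEval s (g s) < 0

variable {G : Set (ℝ → ℝ)}

lemma eventuallyConst_separates (hG : G.Finite) (hGalg : ∀ g ∈ G, EventuallyAlgebraic g)
    (hf : f ∈ G) (hg : g ∈ G) : EventuallyConst (Separates P G f g) atTop := by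
  have hf := hGalg f hf
  have hg := hGalg g hg
  have : Finite G := hG
  have hbetween := eventuallyConst_forall fun h : G =>
    ((hGalg h h.2).eventuallyConst_le hf).comp₂ Or (hg.eventuallyConst_le (hGalg h h.2))
  have hneg := ((hf.evalEval P).mul (hg.evalEval P)).eventuallyConst_lt (.const 0)
  refine ((hf.eventuallyConst_lt hg).comp₂ And (hbetween.comp₂ And hneg)).congr
    (.of_forall fun s => ?_)
  simp [Separates]

lemma exists_separates (hG : G.Finite) {s y : ℝ} (hy : P.evalEval s y = 0) (hyG : ∀ g ∈ G, g s ≠ y)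
    (hlower : ∃ f ∈ G, f s < y) (hupper : ∃ g ∈ G, y < g s)
    (hderiv : ∀ z, P.derivative.evalEval s z = 0 → ∃ g ∈ G, g s = z) :
    ∃ f ∈ G, ∃ g ∈ G, Separates P G f g s ∧ y ∈ Ioo (f s) (g s) := by
  obtain ⟨f, ⟨hf, hfy⟩, hfmax⟩ := exists_max_image {f ∈ G | f s < y} (fun f => f s)
    (hG.subset (sep_subset _ _)) hlower
  obtain ⟨g, ⟨hg, hgy⟩, hgmin⟩ := exists_min_image {g ∈ G | y < g s} (fun g => g s)
    (hG.subset (sep_subset _ _)) hupper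
  have hbetween : ∀ h ∈ G, h s ≤ f s ∨ g s ≤ h s := fun h hh =>
    (lt_or_gt_of_ne (hyG h hh)).imp (fun hlt => hfmax h ⟨hh, hlt⟩) fun hgt => hgmin h ⟨hh, hgt⟩
  refine ⟨f, hf, g, hg, ⟨hfy.trans hgy, hbetween,
    evalEval_mul_neg_of_root (fun z hz hz0 => ?_) le_rfl hfy hgy le_rfl hy⟩, hfy, hgy⟩
  obtain ⟨h, hh, rfl⟩ := hderiv z hz0
  exact (hbetween h hh).elim hz.1.not_ge hz.2.not_ge

lemma exists_root_of_separates (hP : P ≠ 0) (hG : G.Finite)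
    (hGalg : ∀ g ∈ G, EventuallyAlgebraic g)
    (hderiv : ∀ᶠ s in atTop, ∀ z, P.derivative.evalEval s z = 0 → ∃ g ∈ G, g s = z)
    (hf : f ∈ G) (hg : g ∈ G) : ∃ r, EventuallyAlgebraic r ∧
      ∀ᶠ s in atTop, Separates P G f g s → ∀ y ∈ Ioo (f s) (g s), P.evalEval s y = 0 → r s = y := by
  rcases eventuallyConst_pred.1 (eventuallyConst_separates (P := P) hG hGalg hf hg) with hsep | hsep
  · obtain ⟨r, hr, hry⟩ := exists_root hP (hGalg f hf).1 (hGalg g hg).1 (hsep.mono fun s h => h.1)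
      (by
        filter_upwards [hsep, hderiv] with s hs hderiv z hz hz0
        obtain ⟨h, hh, rfl⟩ := hderiv z hz0
        exact (hs.2.1 h hh).elim hz.1.not_ge hz.2.not_ge)
      (hsep.mono fun s h => h.2.2)
    exact ⟨r, hr, hry.mono fun s hs _ => hs⟩
  · exact ⟨_, .const 0, hsep.mono fun s hs h => absurd h hs⟩

-- The roots of `P` are separated by the roots of its derivative.
lemma exists_finite_roots {P : ℝ[X][X]} (hP : P ≠ 0) : ∃ G : Set (ℝ → ℝ), G.Finite ∧
    (∀ g ∈ G, EventuallyAlgebraic g) ∧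
      ∀ᶠ s in atTop, ∀ y, P.evalEval s y = 0 → ∃ g ∈ G, g s = y := by
  induction hN : P.natDegree using Nat.strong_induction_on generalizing P with
  | _ N ih =>
  obtain rfl | hpos := N.eq_zero_or_pos
  · obtain ⟨a, rfl⟩ := natDegree_eq_zero.1 hN
    refine ⟨∅, finite_empty, by simp, ?_⟩
    filter_upwards [eventually_atTop_not_isRoot a (by simpa using hP)] with s hs y hy
    exact absurd (by simpa [Polynomial.evalEval] using hy) hs
  have hderiv0 : P.derivative ≠ 0 := fun h =>
    hpos.ne' (hN ▸ derivative_eq_zero.1 h)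
  obtain ⟨G', hG', hG'alg, hG'root⟩ :=
    ih _ (hN ▸ natDegree_derivative_lt (by omega)) hderiv0 rfl
  obtain ⟨B, hB, hBroot⟩ := exists_abs_root_lt hP
  set G : Set (ℝ → ℝ) := insert B (insert (fun s => -B s) G') with hGdef
  have hG : G.Finite := (hG'.insert _).insert _
  have hGalg : ∀ g ∈ G, EventuallyAlgebraic g := by
    rintro g (rfl | rfl | hg)
    exacts [hB, hB.neg, hG'alg g hg]
  have hderiv : ∀ᶠ s in atTop, ∀ z, P.derivative.evalEval s z = 0 → ∃ g ∈ G, g s = z :=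
    hG'root.mono fun s hs z hz => (hs z hz).imp fun g hg => ⟨.inr (.inr hg.1), hg.2⟩
  choose! r hr hroot using fun p : (ℝ → ℝ) × (ℝ → ℝ) => fun hp : p ∈ G ×ˢ G =>
    exists_root_of_separates hP hG hGalg hderiv hp.1 hp.2
  refine ⟨G ∪ r '' G ×ˢ G, hG.union ((hG.prod hG).image r), ?_, ?_⟩
  · rintro g (hg | ⟨p, hp, rfl⟩)
    exacts [hGalg g hg, hr p hp]
  filter_upwards [(eventually_all_finite (hG.prod hG)).2 hroot, hBroot, hderiv]
    with s hroot hB hderiv y hy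
  by_cases hyG : ∃ g ∈ G, g s = y
  · exact hyG.imp fun g hg => ⟨.inl hg.1, hg.2⟩
  push Not at hyG
  obtain ⟨hlower, hupper⟩ := abs_lt.1 (hB y hy)
  obtain ⟨f, hf, g, hg, hsep, hyI⟩ := exists_separates hG hy hyG
    ⟨_, .inr (.inl rfl), hlower⟩ ⟨_, .inl rfl, hupper⟩ hderiv
  exact ⟨_, .inr (mem_image_of_mem r (mk_mem_prod hf hg)), hroot (f, g) ⟨hf, hg⟩ hsep y hyI hy⟩

end EventuallyAlgebraic

end Roots

namespace IsSemialgebraic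

variable {ι κ : Type*} [Fintype ι] {s t : Set (ι → ℝ)}

lemma compl (h : IsSemialgebraic s) : IsSemialgebraic sᶜ := by
  induction h with
  | eq p =>
    convert (IsSemialgebraic.lt p).union (.lt (-p)) using 1
    ext x
    simp [lt_or_lt_iff_ne, eq_comm]
  | lt p =>
    convert (IsSemialgebraic.lt (-p)).union (.eq p) using 1
    ext x
    simp [le_iff_lt_or_eq]
  | union _ _ hs ht => rw [compl_union]; exact hs.inter ht
  | inter _ _ hs ht => rw [compl_inter]; exact hs.union ht

lemma diff (hs : IsSemialgebraic s) (ht : IsSemialgebraic t) : IsSemialgebraic (s \ t) :=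
  hs.inter ht.compl

lemma empty : IsSemialgebraic (∅ : Set (ι → ℝ)) := by
  simpa using IsSemialgebraic.eq (1 : MvPolynomial ι ℝ)

lemma biUnion {A : Set κ} (hA : A.Finite) {s : κ → Set (ι → ℝ)}
    (h : ∀ k ∈ A, IsSemialgebraic (s k)) : IsSemialgebraic (⋃ k ∈ A, s k) := by
  induction A, hA using Set.Finite.induction_on with
  | empty => simpa using empty
  | insert _ _ ih =>
    rw [biUnion_insert]
    exact (h _ (mem_insert _ _)).union (ih fun k hk => h k (mem_insert_of_mem _ hk))

lemma biInter {A : Set κ} (hA : A.Finite) {s : κ → Set (ι → ℝ)}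
    (h : ∀ k ∈ A, IsSemialgebraic (s k)) : IsSemialgebraic (⋂ k ∈ A, s k) := by
  simpa using (biUnion hA fun k hk => (h k hk).compl).compl

lemma abs_le (p q : MvPolynomial ι ℝ) :
    IsSemialgebraic {x | |MvPolynomial.eval x p| ≤ |MvPolynomial.eval x q|} := by
  convert (IsSemialgebraic.lt (p ^ 2 - q ^ 2)).compl using 1
  ext x
  simp [sq_lt_sq]

lemma measurableSet (h : IsSemialgebraic s) : MeasurableSet s := by
  induction h with
  | eq p => exact (isClosed_eq (MvPolynomial.continuous_eval p) continuous_const).measurableSet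
  | lt p => exact (isOpen_lt continuous_const (MvPolynomial.continuous_eval p)).measurableSet
  | union _ _ hs ht => exact hs.union ht
  | inter _ _ hs ht => exact hs.inter ht

lemma measurableSet_preimage_ofLp (hs : IsSemialgebraic s) :
    MeasurableSet (WithLp.ofLp ⁻¹' s : Set (EuclideanSpace ℝ ι)) :=
  (PiLp.continuous_ofLp 2 _).measurable hs.measurableSet

lemma eventuallyConst_mem (h : IsSemialgebraic s) {z : ι → ℝ → ℝ}
    (hz : ∀ i, EventuallyAlgebraic (z i)) : EventuallyConst (fun r => (z · r) ∈ s) atTop := by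
  induction h with
  | eq p => exact (EventuallyAlgebraic.mvPolynomial_eval hz p).eventuallyConst_eq (.const 0)
  | lt p => exact (EventuallyAlgebraic.const 0).eventuallyConst_lt (.mvPolynomial_eval hz p)
  | union _ _ hs ht => exact hs.comp₂ Or ht
  | inter _ _ hs ht => exact hs.comp₂ And ht

end IsSemialgebraic

section Fibres

variable {ι : Type*} {J : Finset ι} {E : Set (ι → ℝ)}

/-- Every coordinate of a point of `E` is a root of a polynomial whose coefficients are polynomials
in the coordinates with index in `J`, and whose leading coefficient does not vanish at the point. -/
def IsAlgebraicOver (J : Finset ι) (E : Set (ι → ℝ)) : Prop :=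
  ∀ i, ∃ P : Polynomial (MvPolynomial J ℝ), ∀ z ∈ E,
    P.eval₂ (MvPolynomial.eval (J.restrict z)) (z i) = 0 ∧
      MvPolynomial.eval (J.restrict z) P.leadingCoeff ≠ 0

lemma IsAlgebraicOver.mono {E' : Set (ι → ℝ)} (hE : IsAlgebraicOver J E) (h : E' ⊆ E) :
    IsAlgebraicOver J E' := fun i => (hE i).imp fun _ hP z hz => hP z (h hz)

lemma IsAlgebraicOver.of_forall_notMem (hE : ∀ i ∉ J, ∃ P : Polynomial (MvPolynomial J ℝ),
    ∀ z ∈ E, P.eval₂ (MvPolynomial.eval (J.restrict z)) (z i) = 0 ∧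
      MvPolynomial.eval (J.restrict z) P.leadingCoeff ≠ 0) : IsAlgebraicOver J E := by
  intro i
  by_cases hi : i ∈ J
  · exact ⟨Polynomial.X - Polynomial.C (MvPolynomial.X ⟨i, hi⟩), fun z _ => by simp⟩
  · exact hE i hi

/-- The points of `E`, viewed in euclidean space, with prescribed coordinates `x` in `J`. -/
def coordFibre (J : Finset ι) (E : Set (ι → ℝ)) (x : J → ℝ) : Set (EuclideanSpace ℝ ι) :=
  {v | v.ofLp ∈ E ∧ J.restrict v.ofLp = x}

lemma encard_eval₂_roots_le {R S : Type*} [CommRing R] [CommRing S] [IsDomain S] (f : R →+* S)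
    {p : Polynomial R} (h : f p.leadingCoeff ≠ 0) :
    {y | p.eval₂ f y = 0}.encard ≤ p.natDegree := by
  classical
  have hne : p.map f ≠ 0 := fun h0 => h <| by
    simpa using congrArg (Polynomial.coeff · p.natDegree) h0
  have hroots : {y | p.eval₂ f y = 0} = ((p.map f).roots.toFinset : Set S) := by
    ext y
    simp [hne, Polynomial.eval_map]
  rw [hroots, encard_coe_eq_coe_finsetCard]
  exact_mod_cast (Multiset.toFinset_card_le _).trans
    ((Polynomial.card_roots' _).trans Polynomial.natDegree_map_le)

lemma exists_finite_coord_coordFibre (hE : IsAlgebraicOver J E) (x : J → ℝ) (i : ι) :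
    ∃ G : Set (ℝ → ℝ), G.Finite ∧ (∀ g ∈ G, EventuallyAlgebraic g) ∧
      ∀ᶠ s in atTop, ∀ v ∈ coordFibre J E (s • x), ∃ g ∈ G, g s = v.ofLp i := by
  obtain ⟨P, hP⟩ := hE i
  let φ : MvPolynomial J ℝ →+* Polynomial ℝ :=
    (MvPolynomial.aeval fun j => Polynomial.C (x j) * Polynomial.X).toRingHom
  have hφ (s : ℝ) : (Polynomial.evalRingHom s).comp φ = MvPolynomial.eval (s • x) :=
    MvPolynomial.ringHom_ext (by simp [φ]) fun j => by simp [φ, mul_comm (x j)]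
  have hφlead (s : ℝ) (v) (hv : v ∈ coordFibre J E (s • x)) :
      (φ P.leadingCoeff).eval s ≠ 0 := by
    have := (hP _ hv.1).2
    rwa [hv.2, ← hφ] at this
  by_cases hlead : φ P.leadingCoeff = 0
  · exact ⟨∅, finite_empty, by simp, .of_forall fun s v hv =>
      absurd (by rw [hlead, Polynomial.eval_zero]) (hφlead s v hv)⟩
  have hne : P.map φ ≠ 0 := fun h => hlead <| by
    simpa using congrArg (Polynomial.coeff · P.natDegree) h
  obtain ⟨G, hG, hGalg, hroot⟩ := EventuallyAlgebraic.exists_finite_roots hne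
  refine ⟨G, hG, hGalg, hroot.mono fun s hs v hv => hs _ ?_⟩
  rw [← Polynomial.eval₂_evalRingHom, Polynomial.eval₂_map, hφ, ← hv.2]
  exact (hP _ hv.1).1

lemma exists_encard_coordFibre_le [Finite ι] (hE : IsAlgebraicOver J E) :
    ∃ K : ℕ, ∀ x, (coordFibre J E x).encard ≤ K := by
  classical
  cases nonempty_fintype ι
  choose P hP using hE
  refine ⟨∏ i, (P i).natDegree, fun x => ?_⟩
  obtain hempty | ⟨z, hz, rfl⟩ := (coordFibre J E x).eq_empty_or_nonempty
  · simp [hempty]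
  set A : ι → Set ℝ := fun i => {y | (P i).eval₂ (MvPolynomial.eval (J.restrict z.ofLp)) y = 0}
  have hA : ∀ i, (A i).encard ≤ (P i).natDegree := fun i => encard_eval₂_roots_le _ (hP i _ hz).2
  have hAfin : ∀ i, (A i).Finite := fun i => finite_of_encard_le_coe (hA i)
  have hsub : WithLp.ofLp '' coordFibre J E (J.restrict z.ofLp) ⊆
      (Fintype.piFinset fun i => (hAfin i).toFinset : Finset (ι → ℝ)) := by
    rintro _ ⟨v, ⟨hv, hvz⟩, rfl⟩
    simpa [A, ← hvz] using fun i => (hP i _ hv).1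
  rw [← (WithLp.ofLp_injective 2).encard_image]
  refine (encard_le_encard hsub).trans ?_
  rw [encard_coe_eq_coe_finsetCard, Fintype.card_piFinset]
  exact_mod_cast Finset.prod_le_prod' fun i _ => by
    simpa [(hAfin i).encard_eq_coe_toFinset_card] using hA i

variable [Fintype ι]

lemma eventuallyConst_encard_coordFibre_inter_closedBall (hsa : IsSemialgebraic E)
    (hE : IsAlgebraicOver J E) (x : J → ℝ) :
    EventuallyConst (fun s : ℝ => (coordFibre J E (s • x) ∩ closedBall 0 s).encard) atTop := by
  choose G hG hGalg hcover using exists_finite_coord_coordFibre hE x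
  let arc (t : ι → ℝ → ℝ) (s : ℝ) : EuclideanSpace ℝ ι := WithLp.toLp 2 (t · s)
  refine eventuallyConst_encard (T := arc '' pi univ G) ((Finite.pi fun i => hG i).image arc)
    ?_ ?_ ?_
  · filter_upwards [eventually_all.2 hcover] with s hs v hv
    choose t ht htv using fun i => hs i v hv.1
    exact ⟨arc t, mem_image_of_mem _ fun i _ => ht i, by ext i; exact htv i⟩
  · rintro _ ⟨t, ht, rfl⟩
    have halg : ∀ i, EventuallyAlgebraic (t i) := fun i => hGalg i _ (ht i trivial)
    have hlin : ∀ j, EventuallyAlgebraic fun s => s * x j := fun j => by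
      simpa only [Polynomial.eval_X] using (EventuallyAlgebraic.polynomial .X).mul (.const (x j))
    have hfib := eventuallyConst_forall fun j : J => (halg j).eventuallyConst_eq (hlin j)
    have hball := (EventuallyAlgebraic.sum Finset.univ fun i _ =>
      (halg i).mul (halg i)).eventuallyConst_le (.polynomial (.X ^ 2))
    refine (((hsa.eventuallyConst_mem halg).comp₂ And hfib).comp₂ And hball).congr ?_
    filter_upwards [eventually_ge_atTop 0] with s hs
    simp [arc, coordFibre, funext_iff, EuclideanSpace.norm_eq, Real.sqrt_le_left hs, ← sq]
  · rintro _ ⟨t, ht, rfl⟩ _ ⟨t', ht', rfl⟩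
    simpa [arc, funext_iff] using eventuallyConst_forall fun i =>
      (hGalg i _ (ht i trivial)).eventuallyConst_eq (hGalg i _ (ht' i trivial))

end Fibres

section Area

variable {V W : Type*}

/-- Near each point of `s`, the restriction of `f` to `s` changes distances by a factor between
`K⁻¹` and `K`. -/
def LocallyBilipschitzOnWith [PseudoEMetricSpace V] [PseudoEMetricSpace W] (K : ℝ≥0) (f : V → W)
    (s : Set V) : Prop :=
  ∀ x ∈ s, ∃ t ∈ 𝓝[s] x, LipschitzOnWith K f t ∧ AntilipschitzWith K (t.domRestrict f)

lemma LocallyBilipschitzOnWith.mono [PseudoEMetricSpace V] [PseudoEMetricSpace W] {K : ℝ≥0}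
    {f : V → W} {s t : Set V} (hf : LocallyBilipschitzOnWith K f t) (hst : s ⊆ t) :
    LocallyBilipschitzOnWith K f s := fun x hx =>
  (hf x (hst hx)).imp fun _ hu => ⟨nhdsWithin_mono x hst hu.1, hu.2⟩

lemma exists_measurable_partition [TopologicalSpace V] [SecondCountableTopology V]
    [MeasurableSpace V] [OpensMeasurableSpace V] {Y : Set V} (hY : MeasurableSet Y)
    {q : Set V → Prop} (hq0 : q ∅) (hq : ∀ s t, s ⊆ t → q t → q s)
    (h : ∀ x ∈ Y, ∃ t ∈ 𝓝[Y] x, q t) :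
    ∃ D : ℕ → Set V, (∀ k, MeasurableSet (D k)) ∧ Pairwise (Function.onFun Disjoint D) ∧
      ⋃ k, D k = Y ∧ ∀ k, q (D k) := by
  have hopen : ∀ x ∈ Y, ∃ U, IsOpen U ∧ x ∈ U ∧ q (U ∩ Y) := fun x hx => by
    obtain ⟨t, ht, hqt⟩ := h x hx
    obtain ⟨U, hU, hxU, hUt⟩ := mem_nhdsWithin.1 ht
    exact ⟨U, hU, hxU, hq _ _ hUt hqt⟩
  choose! U hU hxU hqU using hopen
  obtain ⟨t, htY, htc, hcover⟩ := TopologicalSpace.countable_cover_nhdsWithin (f := U) (s := Y)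
    fun x hx => mem_nhdsWithin_of_mem_nhds ((hU x hx).mem_nhds (hxU x hx))
  obtain rfl | ht := t.eq_empty_or_nonempty
  · exact ⟨fun _ => ∅, fun _ => .empty, fun _ _ _ => disjoint_empty ∅,
      by simpa [eq_comm, subset_empty_iff] using hcover, fun _ => hq0⟩
  obtain ⟨x, rfl⟩ := htc.exists_eq_range ht
  have hx : ∀ k, x k ∈ Y := fun k => htY ⟨k, rfl⟩
  refine ⟨disjointed fun k => U (x k) ∩ Y,
    .disjointed fun k => (hU _ (hx k)).measurableSet.inter hY, disjoint_disjointed _, ?_,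
    fun k => hq _ _ (disjointed_subset _ k) (hqU _ (hx k))⟩
  rw [iUnion_disjointed, ← iUnion_inter, inter_eq_right]
  simpa using hcover

lemma encard_fibre_eq_tsum_indicator {f : V → W} {D : ℕ → Set V}
    (hD : Pairwise (Function.onFun Disjoint D)) (hf : ∀ k, InjOn f (D k)) (z : W) :
    (((⋃ k, D k) ∩ f ⁻¹' {z}).encard : ℝ≥0∞) = ∑' k, (f '' D k).indicator 1 z := by
  let _ : MeasurableSpace V := ⊤
  rw [iUnion_inter, ← Measure.count_apply MeasurableSpace.measurableSet_top, measure_iUnion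
    (fun i j hij => (hD hij).mono inter_subset_left inter_subset_left)
    fun _ => MeasurableSpace.measurableSet_top]
  congr 1 with k
  by_cases hz : z ∈ f '' D k
  · obtain ⟨v, hv, rfl⟩ := hz
    have : D k ∩ f ⁻¹' {f v} = {v} :=
      Subset.antisymm (fun w hw => hf k hw.1 hv hw.2) (by simpa using hv)
    rw [this, Measure.count_singleton, indicator_of_mem (mem_image_of_mem f hv), Pi.one_apply]
  · have : D k ∩ f ⁻¹' {z} = ∅ :=
      eq_empty_of_forall_notMem fun w hw => hz ⟨w, hw.1, hw.2⟩
    rw [this, measure_empty, indicator_of_notMem hz]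

lemma hausdorffMeasure_le_of_antilipschitzWith_domRestrict [MetricSpace V] [MeasurableSpace V]
    [BorelSpace V] [MetricSpace W] [MeasurableSpace W] [BorelSpace W] {K : ℝ≥0} {f : V → W}
    {t : Set V} (hf : AntilipschitzWith K (t.domRestrict f)) {d : ℝ} (hd : 0 ≤ d) :
    μH[d] t ≤ (K : ℝ≥0∞) ^ d * μH[d] (f '' t) := by
  have h := hf.le_hausdorffMeasure_image hd univ
  rwa [← isometry_subtype_coe.hausdorffMeasure_image (.inl hd), image_univ, Subtype.range_coe,
    image_univ, range_domRestrict] at h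

variable [MetricSpace V] [CompleteSpace V] [SecondCountableTopology V] [MeasurableSpace V]
  [BorelSpace V] [MetricSpace W] [MeasurableSpace W] [BorelSpace W]

namespace LocallyBilipschitzOnWith

variable {K : ℝ≥0} {f : V → W} {Y : Set V}

lemma exists_partition (hf : LocallyBilipschitzOnWith K f Y) (hY : MeasurableSet Y) :
    ∃ D : ℕ → Set V, (∀ k, MeasurableSet (D k)) ∧ (∀ k, MeasurableSet (f '' D k)) ∧
      (∀ (d : ℝ), 0 ≤ d → ∀ k, μH[d] (f '' D k) ≤ (K : ℝ≥0∞) ^ d * μH[d] (D k) ∧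
        μH[d] (D k) ≤ (K : ℝ≥0∞) ^ d * μH[d] (f '' D k)) ∧
      (∀ d : ℝ, μH[d] Y = ∑' k, μH[d] (D k)) ∧
      ∀ z, ((Y ∩ f ⁻¹' {z}).encard : ℝ≥0∞) = ∑' k, (f '' D k).indicator 1 z := by
  obtain ⟨D, hDm, hDd, rfl, hDf⟩ := exists_measurable_partition hY
    (q := fun t => LipschitzOnWith K f t ∧ AntilipschitzWith K (t.domRestrict f))
    ⟨lipschitzOnWith_empty K f, fun x => x.2.elim⟩
    (fun s t hst ht => ⟨ht.1.mono hst, fun x y => ht.2 (inclusion hst x) (inclusion hst y)⟩) hf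
  have hinj : ∀ k, InjOn f (D k) := fun k => injOn_iff_injective.2 (hDf k).2.injective
  exact ⟨D, hDm,
    fun k => (hDm k).image_of_continuousOn_injOn (hDf k).1.continuousOn (hinj k),
    fun d hd k => ⟨(hDf k).1.hausdorffMeasure_image_le hd,
      hausdorffMeasure_le_of_antilipschitzWith_domRestrict (hDf k).2 hd⟩,
    fun d => measure_iUnion hDd hDm, encard_fibre_eq_tsum_indicator hDd hinj⟩

lemma measurable_encard_fibre (hf : LocallyBilipschitzOnWith K f Y) (hY : MeasurableSet Y) :
    Measurable fun z => ((Y ∩ f ⁻¹' {z}).encard : ℝ≥0∞) := by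
  obtain ⟨D, -, hfD, -, -, hcount⟩ := hf.exists_partition hY
  simp_rw [hcount]
  exact .tsum fun k => measurable_one.indicator (hfD k)

lemma hausdorffMeasure_le_lintegral_encard_fibre (hf : LocallyBilipschitzOnWith K f Y)
    (hY : MeasurableSet Y) {d : ℝ} (hd : 0 ≤ d) :
    μH[d] Y ≤ (K : ℝ≥0∞) ^ d * ∫⁻ z, (Y ∩ f ⁻¹' {z}).encard ∂μH[d] := by
  obtain ⟨D, -, hfD, hle, hsum, hcount⟩ := hf.exists_partition hY
  simp_rw [hcount]
  rw [lintegral_tsum fun k => (measurable_one.indicator (hfD k)).aemeasurable, hsum,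
    ← ENNReal.tsum_mul_left]
  refine ENNReal.tsum_le_tsum fun k => ?_
  rw [lintegral_indicator_one (hfD k)]
  exact (hle d hd k).2

lemma lintegral_encard_fibre_le (hf : LocallyBilipschitzOnWith K f Y)
    (hY : MeasurableSet Y) {d : ℝ} (hd : 0 ≤ d) :
    ∫⁻ z, (Y ∩ f ⁻¹' {z}).encard ∂μH[d] ≤ (K : ℝ≥0∞) ^ d * μH[d] Y := by
  obtain ⟨D, -, hfD, hle, hsum, hcount⟩ := hf.exists_partition hY
  simp_rw [hcount]
  rw [lintegral_tsum fun k => (measurable_one.indicator (hfD k)).aemeasurable, hsum,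
    ← ENNReal.tsum_mul_left]
  refine ENNReal.tsum_le_tsum fun k => ?_
  rw [lintegral_indicator_one (hfD k)]
  exact (hle d hd k).1

end LocallyBilipschitzOnWith

end Area

lemma lintegral_hausdorffMeasure_smul {V : Type*} [NormedAddCommGroup V] [NormedSpace ℝ V]
    [MeasurableSpace V] [BorelSpace V] (d : ℕ) {R : ℝ} (hR : 0 < R) (φ : V → ℝ≥0∞) :
    ∫⁻ z, φ z ∂μH[d] = ENNReal.ofReal R ^ d * ∫⁻ z, φ (R • z) ∂μH[d] := by
  let e : V ≃ᵐ V := (Homeomorph.smulOfNeZero R hR.ne').toMeasurableEquiv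
  have hmap : (μH[d] : Measure V) = ENNReal.ofReal R ^ d • (μH[d] : Measure V).map e := by
    ext A -
    have hA : A = R • (e ⁻¹' A) := (image_preimage_eq A e.surjective).symm
    rw [Measure.smul_apply, e.map_apply]
    conv_lhs => rw [hA]
    rw [Measure.hausdorffMeasure_smul₀ (Nat.cast_nonneg d) hR.ne', ENNReal.smul_def,
      NNReal.rpow_natCast, ENNReal.coe_pow, ← enorm_eq_nnnorm, Real.enorm_eq_ofReal hR.le]
  conv_lhs => rw [hmap]
  rw [lintegral_smul_measure, lintegral_map_equiv, smul_eq_mul]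
  rfl

section GraphPiece

variable {ι : Type*} [Fintype ι] {J : Finset ι} {S : Set (ι → ℝ)}

/-- For a parametrization `F` by the coordinates in `J`, the projection onto the range of `F` that
keeps the coordinates in `J`. -/
def graphProj (F : (J → ℝ) →L[ℝ] EuclideanSpace ℝ ι) (v : EuclideanSpace ℝ ι) :
    EuclideanSpace ℝ ι :=
  F (J.restrict v.ofLp)

/-- The number of points of `S` in the ball of radius `R` lying over `R • z`. -/
noncomputable def fibreCount (F : (J → ℝ) →L[ℝ] EuclideanSpace ℝ ι) (S : Set (ι → ℝ)) (R : ℝ)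
    (z : EuclideanSpace ℝ ι) : ℕ∞ :=
  ((WithLp.ofLp ⁻¹' S ∩ closedBall 0 R) ∩ graphProj F ⁻¹' {R • z}).encard

variable {F : (J → ℝ) →L[ℝ] EuclideanSpace ℝ ι}

lemma fibreCount_apply (hF : ∀ x, J.restrict (F x).ofLp = x) (R : ℝ) (x : J → ℝ) :
    fibreCount F S R (F x) = (coordFibre J S (R • x) ∩ closedBall 0 R).encard := by
  have hinj : Function.Injective F :=
    Function.LeftInverse.injective (g := fun v : EuclideanSpace ℝ ι => J.restrict v.ofLp) hF
  rw [fibreCount, inter_right_comm]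
  congr 2
  ext v
  exact and_congr Iff.rfl (by rw [mem_preimage, mem_singleton_iff, ← map_smul]; exact hinj.eq_iff)

lemma norm_restrict_le (v : EuclideanSpace ℝ ι) : ‖J.restrict v.ofLp‖ ≤ ‖v‖ :=
  (pi_norm_le_iff_of_nonneg (norm_nonneg v)).2 fun j => PiLp.norm_apply_le v j

lemma fibreCount_eq_zero {R : ℝ} (hR : 0 < R) {z : EuclideanSpace ℝ ι}
    (hz : z ∉ F '' closedBall 0 1) : fibreCount F S R z = 0 := by
  refine encard_eq_zero.2 <| eq_empty_of_forall_notMem fun v ⟨⟨_, hv⟩, hvz⟩ => hz ?_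
  refine ⟨R⁻¹ • J.restrict v.ofLp, ?_, ?_⟩
  · rw [mem_closedBall_zero_iff] at hv ⊢
    rw [norm_smul, norm_inv, Real.norm_of_nonneg hR.le, inv_mul_le_one₀ hR]
    exact (norm_restrict_le v).trans hv
  · rw [map_smul, show F _ = R • z from hvz, inv_smul_smul₀ hR.ne']

lemma exists_fibreCount_le (hSJ : IsAlgebraicOver J S) (hF : ∀ x, J.restrict (F x).ofLp = x) :
    ∃ m : ℕ, ∀ R > 0, ∀ z, (fibreCount F S R z : ℝ≥0∞) ≤
      (F '' closedBall 0 1).indicator (fun _ => (m : ℝ≥0∞)) z := by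
  obtain ⟨m, hm⟩ := exists_encard_coordFibre_le hSJ
  refine ⟨m, fun R hR z => ?_⟩
  by_cases hz : z ∈ F '' closedBall 0 1
  · rw [indicator_of_mem hz]
    obtain ⟨x, -, rfl⟩ := hz
    rw [fibreCount_apply hF]
    exact_mod_cast (encard_le_encard inter_subset_left).trans (hm _)
  · simp [fibreCount_eq_zero hR hz]

lemma eventuallyConst_fibreCount (hS : IsSemialgebraic S) (hSJ : IsAlgebraicOver J S)
    (hF : ∀ x, J.restrict (F x).ofLp = x) (z : EuclideanSpace ℝ ι) :
    EventuallyConst (fibreCount F S · z) atTop := by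
  by_cases hz : z ∈ F '' closedBall 0 1
  · obtain ⟨x, -, rfl⟩ := hz
    simpa only [fibreCount_apply hF] using
      eventuallyConst_encard_coordFibre_inter_closedBall hS hSJ x
  · exact (EventuallyConst.const 0).congr
      ((eventually_gt_atTop 0).mono fun R hR => (fibreCount_eq_zero hR hz).symm)

lemma measurable_fibreCount (hS : IsSemialgebraic S) {K : ℝ≥0}
    (hloc : LocallyBilipschitzOnWith K (graphProj F) (WithLp.ofLp ⁻¹' S)) (R : ℝ) :
    Measurable fun z => (fibreCount F S R z : ℝ≥0∞) :=
  ((hloc.mono inter_subset_left).measurable_encard_fibre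
    (hS.measurableSet_preimage_ofLp.inter isClosed_closedBall.measurableSet)).comp
    (measurable_const_smul R)

lemma hausdorffMeasure_image_closedBall_lt_top {κ W : Type*} [Fintype κ] [NormedAddCommGroup W]
    [NormedSpace ℝ W] [MeasurableSpace W] [BorelSpace W] (F : (κ → ℝ) →L[ℝ] W) {d : ℕ}
    (hd : Fintype.card κ ≤ d) (r : ℝ) : μH[d] (F '' closedBall 0 r) < ∞ := by
  refine (F.lipschitz.lipschitzOnWith.hausdorffMeasure_image_le (Nat.cast_nonneg d)).trans_lt
    (ENNReal.mul_lt_top (by finiteness) ?_)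
  refine (Measure.hausdorffMeasure_mono (Nat.cast_le.2 hd) _).trans_lt ?_
  rw [hausdorffMeasure_pi_real]
  exact measure_closedBall_lt_top

lemma exists_tendsto_lintegral_fibreCount (hS : IsSemialgebraic S) (hSJ : IsAlgebraicOver J S)
    (hF : ∀ x, J.restrict (F x).ofLp = x) {K : ℝ≥0}
    (hloc : LocallyBilipschitzOnWith K (graphProj F) (WithLp.ofLp ⁻¹' S))
    {d : ℕ} (hd : J.card ≤ d) :
    ∃ L ≠ ∞, Tendsto (fun R => ∫⁻ z, fibreCount F S R z ∂μH[d]) atTop (𝓝 L) := by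
  obtain ⟨m, hm⟩ := exists_fibreCount_le hSJ hF
  choose c hc using fun z =>
    eventuallyConst_iff_exists_eventuallyEq.1 (eventuallyConst_fibreCount hS hSJ hF z)
  have hbound : ∫⁻ z, (F '' closedBall 0 1).indicator (fun _ => (m : ℝ≥0∞)) z ∂μH[d] ≠ ∞ := by
    rw [lintegral_indicator_const ((isCompact_closedBall 0 1).image F.continuous).measurableSet]
    exact ENNReal.mul_ne_top (by finiteness)
      (hausdorffMeasure_image_closedBall_lt_top F (by simpa using hd) 1).ne
  have hlim : Tendsto (fun R => ∫⁻ z, fibreCount F S R z ∂μH[d]) atTop (𝓝 (∫⁻ z, c z ∂μH[d])) :=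
    tendsto_lintegral_filter_of_dominated_convergence _
      (.of_forall (measurable_fibreCount hS hloc))
      ((eventually_gt_atTop 0).mono fun R hR => .of_forall (hm R hR)) hbound
      (.of_forall fun z => tendsto_const_nhds.congr' ((hc z).mono fun R hR => (congrArg _ hR).symm))
  exact ⟨_, ne_top_of_le_ne_top hbound (le_of_tendsto hlim
    ((eventually_gt_atTop 0).mono fun R hR => lintegral_mono (hm R hR))), hlim⟩

end GraphPiece

section Density

/-- Up to a factor `C`, the function `u` agrees with one that converges to a finite limit at
infinity. -/
def ConvergesUpToFactor (C : ℝ≥0) (u : ℝ → ℝ≥0∞) : Prop :=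
  ∃ (g : ℝ → ℝ≥0∞) (L : ℝ≥0∞), L ≠ ∞ ∧ Tendsto g atTop (𝓝 L) ∧
    ∀ᶠ R in atTop, u R ≤ C * g R ∧ g R ≤ C * u R

lemma ConvergesUpToFactor.add {C : ℝ≥0} {u v : ℝ → ℝ≥0∞} (hu : ConvergesUpToFactor C u)
    (hv : ConvergesUpToFactor C v) : ConvergesUpToFactor C (u + v) := by
  obtain ⟨g, L, hL, hg, hgu⟩ := hu
  obtain ⟨h, M, hM, hh, hhv⟩ := hv
  refine ⟨g + h, L + M, ENNReal.add_ne_top.2 ⟨hL, hM⟩, hg.add hh, ?_⟩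
  filter_upwards [hgu, hhv] with R hR hR'
  simp only [Pi.add_apply, mul_add]
  exact ⟨add_le_add hR.1 hR'.1, add_le_add hR.2 hR'.2⟩

lemma ConvergesUpToFactor.mono {C C' : ℝ≥0} {u : ℝ → ℝ≥0∞} (hu : ConvergesUpToFactor C u)
    (hC : C ≤ C') : ConvergesUpToFactor C' u := by
  obtain ⟨g, L, hL, hg, hgu⟩ := hu
  refine ⟨g, L, hL, hg, hgu.mono fun R hR => ?_⟩
  exact ⟨hR.1.trans (by gcongr), hR.2.trans (by gcongr)⟩

lemma ConvergesUpToFactor.limsup_le {C : ℝ≥0} {u : ℝ → ℝ≥0∞} (hu : ConvergesUpToFactor C u) :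
    limsup u atTop ≠ ∞ ∧ limsup u atTop ≤ C ^ 2 * liminf u atTop := by
  obtain ⟨g, L, hL, hg, hgu⟩ := hu
  have hlim : limsup u atTop ≤ C * L := (limsup_le_limsup (hgu.mono fun R hR => hR.1)).trans
    (ENNReal.Tendsto.const_mul hg (.inr ENNReal.coe_ne_top)).limsup_eq.le
  have hliminf : L ≤ C * liminf u atTop := by
    rw [← hg.liminf_eq, ← ENNReal.liminf_const_mul_of_ne_top ENNReal.coe_ne_top]
    exact liminf_le_liminf (hgu.mono fun R hR => hR.2)
  refine ⟨ne_top_of_le_ne_top (by finiteness) hlim, hlim.trans ?_⟩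
  rw [sq, mul_assoc]
  gcongr

lemma exists_tendsto_of_forall_convergesUpToFactor {u : ℝ → ℝ≥0∞}
    (hu : ∀ C > 1, ConvergesUpToFactor C u) : ∃ c ≠ ∞, Tendsto u atTop (𝓝 c) := by
  have htop : liminf u atTop ≠ ∞ :=
    ne_top_of_le_ne_top (hu 2 one_lt_two).limsup_le.1 liminf_le_limsup
  have hle : limsup u atTop ≤ liminf u atTop := by
    have hlim : Tendsto (fun C : ℝ≥0 => (C : ℝ≥0∞) ^ 2 * liminf u atTop) (𝓝[>] 1)
        (𝓝 (liminf u atTop)) := by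
      have hsq : Tendsto (fun C : ℝ≥0 => (C : ℝ≥0∞) ^ 2) (𝓝[>] 1) (𝓝 1) :=
        (Continuous.tendsto' (by fun_prop) 1 1 (by simp)).mono_left nhdsWithin_le_nhds
      simpa only [one_mul] using ENNReal.Tendsto.mul_const hsq (.inr htop)
    exact ge_of_tendsto hlim (eventually_mem_nhdsWithin.mono fun C hC => (hu C hC).limsup_le.2)
  exact ⟨_, htop, tendsto_of_le_liminf_of_limsup_le le_rfl hle⟩

/-- The `d`-dimensional volume of `X` in the ball of radius `R`, relative to `R ^ d`. -/
noncomputable def ballDensity {V : Type*} [NormedAddCommGroup V] [MeasurableSpace V]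
    [BorelSpace V] (d : ℕ) (X : Set V) (R : ℝ) : ℝ≥0∞ :=
  μH[d] (X ∩ closedBall 0 R) / ENNReal.ofReal R ^ d

variable {ι : Type*} [Fintype ι] {d : ℕ} {C : ℝ≥0} {S T : Set (ι → ℝ)}

/-- The densities in large balls of all semialgebraic subsets of `S` converge up to a factor `C`.
Passing to subsets makes the notion stable under unions that need not be disjoint. -/
def DensityConverges (d : ℕ) (C : ℝ≥0) (S : Set (ι → ℝ)) : Prop :=
  ∀ T ⊆ S, IsSemialgebraic T →
    ConvergesUpToFactor C (ballDensity d (WithLp.ofLp ⁻¹' T : Set (EuclideanSpace ℝ ι)))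

namespace DensityConverges

lemma mono (hT : DensityConverges d C T) (hST : S ⊆ T) : DensityConverges d C S :=
  fun U hU => hT U (hU.trans hST)

lemma union (hS : DensityConverges d C S) (hSsa : IsSemialgebraic S)
    (hT : DensityConverges d C T) : DensityConverges d C (S ∪ T) := by
  intro U hU hUsa
  have hadd := (hS _ inter_subset_right (hUsa.inter hSsa)).add
    (hT (U \ S) (fun z hz => (hU hz.1).resolve_left hz.2) (hUsa.diff hSsa))
  convert hadd using 1
  ext R
  have hdisj : Disjoint (WithLp.ofLp ⁻¹' (U ∩ S) : Set (EuclideanSpace ℝ ι))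
      (WithLp.ofLp ⁻¹' (U \ S)) := (disjoint_sdiff_right.mono_left inter_subset_right).preimage _
  rw [Pi.add_apply, ballDensity, ballDensity, ballDensity, ← ENNReal.add_div,
    ← measure_union (hdisj.mono inter_subset_left inter_subset_left)
      ((hUsa.diff hSsa).measurableSet_preimage_ofLp.inter isClosed_closedBall.measurableSet),
    ← union_inter_distrib_right, ← preimage_union, inter_union_sdiff]

lemma empty : DensityConverges d C (∅ : Set (ι → ℝ)) := by
  intro U hU _
  obtain rfl := subset_empty_iff.1 hU
  exact ⟨0, 0, ENNReal.zero_ne_top, tendsto_const_nhds, .of_forall fun R => by simp [ballDensity]⟩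

lemma biUnion {κ : Type*} {A : Set κ} (hA : A.Finite) {S : κ → Set (ι → ℝ)}
    (hSsa : ∀ k ∈ A, IsSemialgebraic (S k)) (hS : ∀ k ∈ A, DensityConverges d C (S k)) :
    DensityConverges d C (⋃ k ∈ A, S k) := by
  induction A, hA using Set.Finite.induction_on with
  | empty => simpa using empty
  | insert _ _ ih =>
    rw [biUnion_insert]
    exact (hS _ (mem_insert _ _)).union (hSsa _ (mem_insert _ _))
      (ih (fun k hk => hSsa k (mem_insert_of_mem _ hk)) fun k hk => hS k (mem_insert_of_mem _ hk))

end DensityConverges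

lemma densityConverges_of_graph {J : Finset ι} {F : (J → ℝ) →L[ℝ] EuclideanSpace ℝ ι}
    (hF : ∀ x, J.restrict (F x).ofLp = x) (hSJ : IsAlgebraicOver J S) {K : ℝ≥0}
    (hloc : LocallyBilipschitzOnWith K (graphProj F) (WithLp.ofLp ⁻¹' S)) (hd : J.card ≤ d) :
    DensityConverges d (K ^ d) S := by
  intro T hTS hT
  replace hloc := hloc.mono (preimage_mono hTS)
  obtain ⟨L, hL, hlim⟩ := exists_tendsto_lintegral_fibreCount hT (hSJ.mono hTS) hF hloc hd
  refine ⟨_, L, hL, hlim, (eventually_gt_atTop 0).mono fun R hR => ?_⟩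
  have hball := hloc.mono (inter_subset_left (t := closedBall 0 R))
  have hTm := hT.measurableSet_preimage_ofLp.inter
    (isClosed_closedBall (x := 0) (ε := R)).measurableSet
  have hle := hball.hausdorffMeasure_le_lintegral_encard_fibre hTm (Nat.cast_nonneg d)
  have hge := hball.lintegral_encard_fibre_le hTm (Nat.cast_nonneg d)
  rw [lintegral_hausdorffMeasure_smul d hR, ENNReal.rpow_natCast] at hle hge
  have hR0 : ENNReal.ofReal R ^ d ≠ 0 := by positivity
  have hRt : ENNReal.ofReal R ^ d ≠ ∞ := by finiteness
  constructor
  · rw [ballDensity, ENNReal.div_le_iff hR0 hRt, ENNReal.coe_pow, mul_assoc,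
      mul_comm (lintegral _ _)]
    exact hle
  · rw [ballDensity, ENNReal.coe_pow, ← mul_div_assoc,
      ENNReal.le_div_iff_mul_le (.inl hR0) (.inl hRt), mul_comm]
    exact hge

end Density

section Differential

variable {ι : Type*} [Fintype ι]

/-- The differential at `z` of the function on `ι → ℝ` defined by the polynomial `p`. -/
noncomputable def differential (p : MvPolynomial ι ℝ) (z : ι → ℝ) : (ι → ℝ) →L[ℝ] ℝ :=
  ∑ i, MvPolynomial.eval z (MvPolynomial.pderiv i p) • ContinuousLinearMap.proj i

lemma differential_apply (p : MvPolynomial ι ℝ) (z v : ι → ℝ) :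
    differential p z v = ∑ i, MvPolynomial.eval z (MvPolynomial.pderiv i p) * v i := by
  simp [differential]

lemma hasStrictFDerivAt_mvPolynomial_eval (p : MvPolynomial ι ℝ) (z : ι → ℝ) :
    HasStrictFDerivAt (fun z => MvPolynomial.eval z p) (differential p z) z := by
  classical
  induction p using MvPolynomial.induction_on with
  | C a => simpa [differential] using hasStrictFDerivAt_const a z
  | add p q hp hq =>
    have hadd : differential (p + q) z = differential p z + differential q z := by
      ext v; simp [differential_apply, add_mul, Finset.sum_add_distrib]
    simp only [map_add, hadd]
    exact hp.add hq
  | mul_X p i hp =>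
    have hmul : differential (p * MvPolynomial.X i) z = MvPolynomial.eval z p •
        ContinuousLinearMap.proj (R := ℝ) (φ := fun _ : ι => ℝ) i + z i • differential p z := by
      refine ContinuousLinearMap.ext fun v => ?_
      simp [differential_apply, MvPolynomial.pderiv_X, Pi.single_apply, Finset.sum_add_distrib,
        add_mul, Finset.mul_sum, mul_assoc, apply_ite]
    simp only [map_mul, MvPolynomial.eval_X, hmul]
    exact hp.mul (hasStrictFDerivAt_apply i z)

lemma eventually_abs_differential_sub_le (p : MvPolynomial ι ℝ) (z : EuclideanSpace ℝ ι) {η : ℝ}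
    (hη : 0 < η) : ∀ᶠ q : EuclideanSpace ℝ ι × EuclideanSpace ℝ ι in 𝓝 (z, z),
      MvPolynomial.eval q.1.ofLp p = 0 → MvPolynomial.eval q.2.ofLp p = 0 →
        |differential p z.ofLp (q.1 - q.2).ofLp| ≤ η * ‖q.1 - q.2‖ := by
  have hstrict : HasStrictFDerivAt
      (fun v : EuclideanSpace ℝ ι => MvPolynomial.eval v.ofLp p) _ z :=
    (hasStrictFDerivAt_mvPolynomial_eval p z.ofLp).comp z
      (EuclideanSpace.equiv ι ℝ).hasStrictFDerivAt
  filter_upwards [(hasStrictFDerivAt_iff_isLittleO.1 hstrict).def hη] with q hq h₁ h₂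
  rwa [h₁, h₂, sub_zero, zero_sub, norm_neg] at hq

end Differential

section LinearModel

variable {V : Type*} [NormedAddCommGroup V] {E : Set V} {f : V → V}

lemma locallyBilipschitzOnWith_of_norm_sub_sub_le {K : ℝ≥0} (hK : 1 ≤ K)
    (h : ∀ p ∈ E, ∀ᶠ q : V × V in 𝓝 (p, p), q.1 ∈ E → q.2 ∈ E →
      ‖(q.1 - q.2) - (f q.1 - f q.2)‖ ≤ (1 - (K : ℝ)⁻¹) * ‖q.1 - q.2‖) :
    LocallyBilipschitzOnWith K f E := by
  intro p hp
  have hev := h p hp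
  rw [nhds_prod_eq] at hev
  obtain ⟨U, hU, hUU⟩ := mem_prod_self_iff.1 hev
  have hclose : ∀ a ∈ E ∩ U, ∀ b ∈ E ∩ U,
      ‖(a - b) - (f a - f b)‖ ≤ (1 - (K : ℝ)⁻¹) * ‖a - b‖ :=
    fun a ha b hb => hUU (mk_mem_prod ha.2 hb.2) ha.1 hb.1
  have hK0 : (0 : ℝ) < K := by positivity
  have hK1 : (1 : ℝ) ≤ K := hK
  have hinv : (K : ℝ) * (K : ℝ)⁻¹ = 1 := mul_inv_cancel₀ hK0.ne'
  refine ⟨E ∩ U, inter_mem_nhdsWithin E hU, LipschitzOnWith.of_dist_le_mul fun a ha b hb => ?_,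
    AntilipschitzWith.of_le_mul_dist fun a b => ?_⟩
  · rw [dist_eq_norm, dist_eq_norm]
    have hle : 2 - (K : ℝ)⁻¹ ≤ K := by nlinarith [inv_le_one_of_one_le₀ hK1]
    calc ‖f a - f b‖ ≤ ‖a - b‖ + ‖(a - b) - (f a - f b)‖ := norm_le_insert _ _
      _ ≤ (2 - (K : ℝ)⁻¹) * ‖a - b‖ := by linarith [hclose a ha b hb]
      _ ≤ K * ‖a - b‖ := by gcongr
  · rw [Subtype.dist_eq, dist_eq_norm, dist_eq_norm]
    have hlow : (K : ℝ)⁻¹ * ‖(a : V) - b‖ ≤ ‖f a - f b‖ := by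
      have := norm_le_insert' ((a : V) - b) (f a - f b)
      linarith [hclose a a.2 b b.2]
    exact (inv_mul_le_iff₀ hK0).1 hlow

end LinearModel

section SlopeGraph

variable {ι : Type*} {J : Finset ι}

open Classical in
/-- The parametrization, by the coordinates in `J`, of the linear subspace on which the coordinate
with index `k ∉ J` is the linear form with coefficients `L k`. -/
noncomputable def slopeGraph (L : ι → J → ℝ) : (J → ℝ) →L[ℝ] EuclideanSpace ℝ ι :=
  (EuclideanSpace.equiv ι ℝ).symm.toContinuousLinearMap ∘L ContinuousLinearMap.pi fun k =>
    if h : k ∈ J then ContinuousLinearMap.proj ⟨k, h⟩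
    else ∑ j, L k j • ContinuousLinearMap.proj j

variable {L : ι → J → ℝ}

lemma slopeGraph_apply_of_mem {k : ι} (hk : k ∈ J) (w : J → ℝ) :
    slopeGraph L w k = w ⟨k, hk⟩ := by
  simp [slopeGraph, hk]

lemma slopeGraph_apply_of_notMem {k : ι} (hk : k ∉ J) (w : J → ℝ) :
    slopeGraph L w k = ∑ j, L k j * w j := by
  simp [slopeGraph, hk]

lemma restrict_slopeGraph (w : J → ℝ) : J.restrict (slopeGraph L w).ofLp = w :=
  funext fun j => slopeGraph_apply_of_mem j.2 w

variable [Fintype ι]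

lemma norm_le_card_mul_of_forall_abs_le (v : EuclideanSpace ℝ ι) {r : ℝ} (h : ∀ i, |v i| ≤ r) :
    ‖v‖ ≤ Fintype.card ι * r := by
  classical
  calc ‖v‖ = ‖∑ i, EuclideanSpace.single i (v i)‖ := by
        congr 1; ext j; simp [Finset.sum_apply, Pi.single_apply]
    _ ≤ ∑ i, ‖EuclideanSpace.single i (v i)‖ := norm_sum_le _ _
    _ ≤ ∑ _i : ι, r := Finset.sum_le_sum fun i _ => by simpa using h i
    _ = Fintype.card ι * r := by simp

lemma differential_apply_eq_add_sum {p : MvPolynomial ι ℝ} {i : ι} (hi : i ∉ J)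
    (hp : ∀ k ∉ J, k ≠ i → MvPolynomial.pderiv k p = 0) (z u : ι → ℝ) :
    differential p z u = MvPolynomial.eval z (MvPolynomial.pderiv i p) * u i +
      ∑ j : J, MvPolynomial.eval z (MvPolynomial.pderiv (j : ι) p) * u j := by
  classical
  rw [differential_apply, Finset.sum_coe_sort J
    (fun j => MvPolynomial.eval z (MvPolynomial.pderiv j p) * u j), 
    ← Finset.sum_insert (f := fun j => MvPolynomial.eval z (MvPolynomial.pderiv j p) * u j) hi]
  refine (Finset.sum_subset (Finset.subset_univ _) fun k _ hk => ?_).symm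
  rw [Finset.mem_insert, not_or] at hk
  simp [hp k hk.2 hk.1]

lemma abs_sub_sum_slope_le {p : MvPolynomial ι ℝ} {i : ι} (hi : i ∉ J)
    (hp : ∀ k ∉ J, k ≠ i → MvPolynomial.pderiv k p = 0) {z : ι → ℝ} {δ η : ℝ}
    (hz : MvPolynomial.eval z (MvPolynomial.pderiv i p) ≠ 0)
    (hslope : ∀ j : J, |MvPolynomial.eval z (MvPolynomial.pderiv (j : ι) p) +
      L i j * MvPolynomial.eval z (MvPolynomial.pderiv i p)| ≤
        δ * |MvPolynomial.eval z (MvPolynomial.pderiv i p)|) (u : EuclideanSpace ℝ ι)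
    (hu : |differential p z u.ofLp| ≤
      η * |MvPolynomial.eval z (MvPolynomial.pderiv i p)| * ‖u‖) :
    |u i - ∑ j : J, L i j * u j| ≤ (η + J.card * δ) * ‖u‖ := by
  rw [differential_apply_eq_add_sum hi hp] at hu
  set c := MvPolynomial.eval z (MvPolynomial.pderiv i p)
  set b : J → ℝ := fun j => MvPolynomial.eval z (MvPolynomial.pderiv (j : ι) p)
  have hsum : |∑ j : J, (b j + L i j * c) * u j| ≤ J.card * (δ * |c| * ‖u‖) := by
    calc |∑ j : J, (b j + L i j * c) * u j| ≤ ∑ j : J, |(b j + L i j * c) * u j| :=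
          Finset.abs_sum_le_sum_abs _ _
      _ ≤ ∑ _j : J, δ * |c| * ‖u‖ := Finset.sum_le_sum fun j _ => by
          rw [abs_mul]
          exact mul_le_mul (hslope j) (PiLp.norm_apply_le u j.1) (abs_nonneg _)
            ((abs_nonneg _).trans (hslope j))
      _ = J.card * (δ * |c| * ‖u‖) := by simp
  have hsplit : c * (u i - ∑ j : J, L i j * u j) =
      (c * u i + ∑ j : J, b j * u j) - ∑ j : J, (b j + L i j * c) * u j := by
    simp only [add_mul, Finset.sum_add_distrib, mul_right_comm _ c, ← Finset.sum_mul]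
    ring
  rw [← mul_le_mul_iff_right₀ (abs_pos.2 hz), ← abs_mul, hsplit]
  linarith [abs_sub (c * u i + ∑ j : J, b j * u j) (∑ j : J, (b j + L i j * c) * u j)]

lemma locallyBilipschitzOnWith_graphProj_slopeGraph {f : ι → MvPolynomial ι ℝ}
    (hf : ∀ i ∉ J, ∀ k ∉ J, k ≠ i → MvPolynomial.pderiv k (f i) = 0) {E : Set (ι → ℝ)}
    {K : ℝ≥0} {δ : ℝ} (hK : 1 ≤ K) (hδ₀ : 0 ≤ δ)
    (hδ : Fintype.card ι * (J.card * δ) < 1 - (K : ℝ)⁻¹)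
    (hzero : ∀ z ∈ E, ∀ i ∉ J, MvPolynomial.eval z (f i) = 0)
    (hderiv : ∀ z ∈ E, ∀ i ∉ J, MvPolynomial.eval z (MvPolynomial.pderiv i (f i)) ≠ 0)
    (hslope : ∀ z ∈ E, ∀ i ∉ J, ∀ j : J,
      |MvPolynomial.eval z (MvPolynomial.pderiv (j : ι) (f i)) +
        L i j * MvPolynomial.eval z (MvPolynomial.pderiv i (f i))| ≤
          δ * |MvPolynomial.eval z (MvPolynomial.pderiv i (f i))|) :
    LocallyBilipschitzOnWith K (graphProj (slopeGraph L)) (WithLp.ofLp ⁻¹' E) := by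
  refine locallyBilipschitzOnWith_of_norm_sub_sub_le hK fun p hp => ?_
  obtain ⟨η, hη0, hη⟩ : ∃ η : ℝ, 0 < η ∧
      Fintype.card ι * (η + J.card * δ) ≤ 1 - (K : ℝ)⁻¹ := by
    refine ⟨(1 - (K : ℝ)⁻¹ - Fintype.card ι * (J.card * δ)) / (Fintype.card ι + 1),
      div_pos (sub_pos.2 hδ) (by positivity), ?_⟩
    have hcard : Fintype.card ι * ((1 - (K : ℝ)⁻¹ - Fintype.card ι * (J.card * δ)) /
        (Fintype.card ι + 1)) ≤ 1 - (K : ℝ)⁻¹ - Fintype.card ι * (J.card * δ) := by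
      rw [mul_div_left_comm]
      exact mul_le_of_le_one_right (sub_pos.2 hδ).le ((div_le_one (by positivity)).2 (by simp))
    linarith
  have hsmall : ∀ᶠ q : EuclideanSpace ℝ ι × EuclideanSpace ℝ ι in 𝓝 (p, p), ∀ i, i ∉ J →
      MvPolynomial.eval q.1.ofLp (f i) = 0 → MvPolynomial.eval q.2.ofLp (f i) = 0 →
        |differential (f i) p.ofLp (q.1 - q.2).ofLp| ≤
          η * |MvPolynomial.eval p.ofLp (MvPolynomial.pderiv i (f i))| * ‖q.1 - q.2‖ :=
    eventually_all.2 fun i => eventually_imp_distrib_left.2 fun hi =>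
      eventually_abs_differential_sub_le (f i) p (mul_pos hη0 (abs_pos.2 (hderiv _ hp i hi)))
  filter_upwards [hsmall] with q hq h₁ h₂
  have hsub : graphProj (slopeGraph L) q.1 - graphProj (slopeGraph L) q.2 =
      slopeGraph L (J.restrict (q.1 - q.2).ofLp) := (map_sub (slopeGraph L) _ _).symm
  rw [hsub]
  refine (norm_le_card_mul_of_forall_abs_le _ (r := (η + J.card * δ) * ‖q.1 - q.2‖)
    fun i => ?_).trans ?_
  · by_cases hi : i ∈ J
    · rw [PiLp.sub_apply, slopeGraph_apply_of_mem hi]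
      simpa using by positivity
    · rw [PiLp.sub_apply, slopeGraph_apply_of_notMem hi]
      exact abs_sub_sum_slope_le hi (hf i hi) (hderiv _ hp i hi) (hslope _ hp i hi) _
        (hq i hi (hzero _ h₁ i hi) (hzero _ h₂ i hi))
  · rw [← mul_assoc]
    gcongr

end SlopeGraph

section TotalDegree

variable {σ R : Type*} [CommSemiring R] {Q : MvPolynomial σ R}

lemma exists_pderiv_ne_zero [NoZeroDivisors R] [CharZero R] (hQ : Q.totalDegree ≠ 0) :
    ∃ j, MvPolynomial.pderiv j Q ≠ 0 := by
  classical
  rw [Ne, MvPolynomial.totalDegree_eq_zero_iff] at hQ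
  push Not at hQ
  obtain ⟨m, hm, j, hj⟩ := hQ
  have hsub : m - Finsupp.single j 1 + Finsupp.single j 1 = m :=
    tsub_add_cancel_of_le (Finsupp.single_le_iff.2 (Nat.one_le_iff_ne_zero.2 hj))
  refine ⟨j, fun h => mul_ne_zero (MvPolynomial.mem_support_iff.1 hm)
    (Nat.cast_add_one_ne_zero ((m - Finsupp.single j 1 : σ →₀ ℕ) j)) ?_⟩
  have hcoeff := MvPolynomial.coeff_pderiv (i := j) Q (m - Finsupp.single j 1)
  rwa [h, hsub, MvPolynomial.coeff_zero, eq_comm] at hcoeff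

lemma totalDegree_pderiv_lt (hQ : Q.totalDegree ≠ 0) (j : σ) :
    (MvPolynomial.pderiv j Q).totalDegree < Q.totalDegree := by
  rw [MvPolynomial.totalDegree, Finset.sup_lt_iff (by simpa using Nat.pos_of_ne_zero hQ)]
  intro s hs
  rw [MvPolynomial.mem_support_iff, MvPolynomial.coeff_pderiv] at hs
  have hle := MvPolynomial.le_totalDegree
    (MvPolynomial.mem_support_iff.2 (left_ne_zero_of_mul hs))
  rwa [Finsupp.sum_add_index' (fun _ => rfl) (fun _ _ _ => rfl), Finsupp.sum_single_index rfl]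
    at hle

end TotalDegree

section CoordinatePolynomials

variable {ι : Type*} {J : Finset ι} {i : ι}

/-- The polynomial in the coordinates with index in `J` or equal to `i` that is obtained by
substituting `X i` for the variable of a polynomial over `MvPolynomial J ℝ`. -/
noncomputable def substVar (J : Finset ι) (i : ι) :
    Polynomial (MvPolynomial J ℝ) →+* MvPolynomial ι ℝ :=
  Polynomial.eval₂RingHom (MvPolynomial.rename (Subtype.val : J → ι)).toRingHom (MvPolynomial.X i)

lemma substVar_C (q : MvPolynomial J ℝ) :
    substVar J i (Polynomial.C q) = MvPolynomial.rename Subtype.val q := by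
  simp [substVar]

lemma substVar_X : substVar J i Polynomial.X = MvPolynomial.X i := by
  simp [substVar]

lemma eval_rename_val (q : MvPolynomial J ℝ) (z : ι → ℝ) :
    MvPolynomial.eval z (MvPolynomial.rename Subtype.val q) =
      MvPolynomial.eval (J.restrict z) q :=
  MvPolynomial.eval_rename _ _ _

lemma eval_eval₂_rename (P : Polynomial (MvPolynomial J ℝ)) (h : MvPolynomial ι ℝ) (z : ι → ℝ) :
    MvPolynomial.eval z
        (P.eval₂ (MvPolynomial.rename (Subtype.val : J → ι)).toRingHom h) =
      P.eval₂ (MvPolynomial.eval (J.restrict z)) (MvPolynomial.eval z h) := by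
  rw [Polynomial.hom_eval₂]
  congr 1
  exact RingHom.ext fun q => eval_rename_val q z

lemma eval_substVar (P : Polynomial (MvPolynomial J ℝ)) (z : ι → ℝ) :
    MvPolynomial.eval z (substVar J i P) =
      P.eval₂ (MvPolynomial.eval (J.restrict z)) (z i) :=
  (eval_eval₂_rename P (MvPolynomial.X i) z).trans (by rw [MvPolynomial.eval_X])

lemma pderiv_rename_val_eq_zero {k : ι} (hk : k ∉ J) (q : MvPolynomial J ℝ) :
    MvPolynomial.pderiv k (MvPolynomial.rename Subtype.val q) = 0 := by
  classical
  refine MvPolynomial.pderiv_eq_zero_of_notMem_vars fun h => hk ?_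
  obtain ⟨j, -, rfl⟩ := Finset.mem_image.1 (MvPolynomial.vars_rename _ q h)
  exact j.2

lemma pderiv_substVar_eq_zero {k : ι} (hk : k ∉ J) (hki : k ≠ i)
    (P : Polynomial (MvPolynomial J ℝ)) : MvPolynomial.pderiv k (substVar J i P) = 0 := by
  induction P using Polynomial.induction_on' with
  | add p q hp hq => simp [hp, hq]
  | monomial m a =>
    simp [← Polynomial.C_mul_X_pow_eq_monomial, substVar_X, substVar_C,
      pderiv_rename_val_eq_zero hk, MvPolynomial.pderiv_X_of_ne hki.symm]

lemma pderiv_substVar_self (hi : i ∉ J) (P : Polynomial (MvPolynomial J ℝ)) :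
    MvPolynomial.pderiv i (substVar J i P) = substVar J i (Polynomial.derivative P) := by
  induction P using Polynomial.induction_on' with
  | add p q hp hq => simp [hp, hq]
  | monomial m a =>
    simp [← Polynomial.C_mul_X_pow_eq_monomial, substVar_X, substVar_C,
      pderiv_rename_val_eq_zero hi, Polynomial.derivative_X_pow]

end CoordinatePolynomials

section Independence

variable {ι : Type*} {I : Ideal (MvPolynomial ι ℝ)} {J : Finset ι}

/-- The coordinates with index in `J` are algebraically independent modulo `I`. -/
def IndependentMod (I : Ideal (MvPolynomial ι ℝ)) (J : Finset ι) : Prop :=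
  AlgebraicIndependent ℝ fun j : J => Ideal.Quotient.mk I (MvPolynomial.X (j : ι))

lemma aeval_mk_X (q : MvPolynomial J ℝ) :
    MvPolynomial.aeval (fun j : J => Ideal.Quotient.mk I (MvPolynomial.X (j : ι))) q =
      Ideal.Quotient.mk I (MvPolynomial.rename Subtype.val q) := by
  induction q using MvPolynomial.induction_on with
  | C a => simp [← MvPolynomial.algebraMap_eq]; rfl
  | add p q hp hq => simp only [map_add, hp, hq]
  | mul_X p j hp => simp only [map_mul, hp, MvPolynomial.aeval_X, MvPolynomial.rename_X]

lemma independentMod_iff :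
    IndependentMod I J ↔ ∀ q : MvPolynomial J ℝ, MvPolynomial.rename Subtype.val q ∈ I → q = 0 := by
  simp only [IndependentMod, algebraicIndependent_iff, aeval_mk_X, Ideal.Quotient.eq_zero_iff_mem]

lemma independentMod_empty (hI : I ≠ ⊤) : IndependentMod I ∅ :=
  have := Ideal.Quotient.nontrivial_iff.2 hI
  algebraicIndependent_empty_type

lemma exists_substVar_mem_of_not_independentMod_insert [DecidableEq ι] {i : ι} (hi : i ∉ J)
    (hJ : IndependentMod I J) (hins : ¬ IndependentMod I (insert i J)) :
    ∃ P : Polynomial (MvPolynomial J ℝ), P ≠ 0 ∧ substVar J i P ∈ I := by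
  set x : J → MvPolynomial ι ℝ ⧸ I := fun j => Ideal.Quotient.mk I (MvPolynomial.X (j : ι))
  have hopt : ¬ AlgebraicIndependent ℝ
      (fun o : Option J => o.elim (Ideal.Quotient.mk I (MvPolynomial.X i)) x) := by
    refine fun h => hins ?_
    rw [IndependentMod]
    convert (algebraicIndependent_equiv (Finset.subtypeInsertEquivOption hi)).2 h with k
    by_cases hk : (k : ι) = i <;> simp [Finset.subtypeInsertEquivOption, hk, x]
  rw [AlgebraicIndependent.option_iff_transcendental hJ, Transcendental, not_not] at hopt
  obtain ⟨P, hP0, hP⟩ := hopt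
  let e := (AlgebraicIndependent.aevalEquiv hJ).symm
  refine ⟨P.map (e : _ →+* _), (Polynomial.map_ne_zero_iff e.injective).2 hP0, ?_⟩
  rw [← Ideal.Quotient.eq_zero_iff_mem, ← hP, substVar, Polynomial.coe_eval₂RingHom,
    Polynomial.hom_eval₂, Polynomial.eval₂_map, Polynomial.aeval_def]
  congr 1
  refine RingHom.ext fun a => ?_
  exact (aeval_mk_X (e a)).symm.trans (hJ.aeval_repr a)

lemma exists_pderiv_notMem_of_not_independentMod (hI : I ≠ ⊤) (hJ : ¬ IndependentMod I J) :
    ∃ (Q : MvPolynomial J ℝ) (j : J), MvPolynomial.rename Subtype.val Q ∈ I ∧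
      MvPolynomial.pderiv (j : ι) (MvPolynomial.rename Subtype.val Q) ∉ I := by
  rw [independentMod_iff] at hJ
  push Not at hJ
  let A : Set (MvPolynomial J ℝ) := {q | MvPolynomial.rename Subtype.val q ∈ I ∧ q ≠ 0}
  have hA : A.Nonempty := hJ
  let Q := Function.argminOn MvPolynomial.totalDegree A hA
  obtain ⟨hQI, hQ0⟩ : Q ∈ A := Function.argminOn_mem _ _ hA
  have hdeg : Q.totalDegree ≠ 0 := by
    intro h
    have hQC := MvPolynomial.totalDegree_eq_zero_iff_eq_C.1 h
    have hc : Q.coeff 0 ≠ 0 := fun hc => hQ0 (by rw [hQC, hc, map_zero])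
    rw [hQC, MvPolynomial.rename_C] at hQI
    exact hI (Ideal.eq_top_of_isUnit_mem _ hQI (hc.isUnit.map MvPolynomial.C))
  obtain ⟨j, hj⟩ := exists_pderiv_ne_zero hdeg
  refine ⟨Q, j, hQI, fun hmem => ?_⟩
  rw [MvPolynomial.pderiv_rename Subtype.val_injective] at hmem
  exact (totalDegree_pderiv_lt hdeg j).not_ge
    (Function.argminOn_le MvPolynomial.totalDegree A ⟨hmem, hj⟩)

/-- `J` has the largest cardinality among the finite sets of coordinates that are algebraically
independent modulo `I`; for `I` prime, these are the coordinate transcendence bases of the function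
field. -/
structure IsMaxIndependentMod (I : Ideal (MvPolynomial ι ℝ)) (J : Finset ι) : Prop where
  independentMod : IndependentMod I J
  card_le : ∀ J', IndependentMod I J' → J'.card ≤ J.card

lemma exists_isMaxIndependentMod [Finite ι] (hI : I ≠ ⊤) : ∃ J, IsMaxIndependentMod I J := by
  obtain ⟨J, hJ, hmax⟩ := Set.exists_max_image {J : Finset ι | IndependentMod I J} Finset.card
    (Set.toFinite _) ⟨∅, independentMod_empty hI⟩
  exact ⟨J, hJ, hmax⟩

lemma IsMaxIndependentMod.of_card_eq {J' : Finset ι} (hJ : IsMaxIndependentMod I J)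
    (hJ' : IndependentMod I J') (hcard : J'.card = J.card) : IsMaxIndependentMod I J' :=
  ⟨hJ', fun K hK => (hJ.card_le K hK).trans_eq hcard.symm⟩

/-- Modulo `I`, the polynomial `P` is a separable equation for the `i`-th coordinate over the
coordinates with index in `J`: off a proper subvariety, its leading coefficient does not vanish and
its roots are simple. -/
structure IsSeparableRelation (I : Ideal (MvPolynomial ι ℝ)) (J : Finset ι) (i : ι)
    (P : Polynomial (MvPolynomial J ℝ)) : Prop where
  mem : substVar J i P ∈ I
  leadingCoeff_notMem : MvPolynomial.rename Subtype.val P.leadingCoeff ∉ I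
  pderiv_notMem : MvPolynomial.pderiv i (substVar J i P) ∉ I

lemma IsMaxIndependentMod.exists_isSeparableRelation {i : ι} (hJ : IsMaxIndependentMod I J)
    (hi : i ∉ J) : ∃ P, IsSeparableRelation I J i P := by
  classical
  have hins : ¬ IndependentMod I (insert i J) := fun h => by
    have := hJ.card_le _ h
    rw [Finset.card_insert_of_notMem hi] at this
    omega
  let A : Set (Polynomial (MvPolynomial J ℝ)) := {P | P ≠ 0 ∧ substVar J i P ∈ I}
  have hA : A.Nonempty := exists_substVar_mem_of_not_independentMod_insert hi hJ.independentMod hins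
  let P := Function.argminOn Polynomial.natDegree A hA
  obtain ⟨hP0, hPI⟩ : P ∈ A := Function.argminOn_mem _ _ hA
  have hlead : MvPolynomial.rename Subtype.val P.leadingCoeff ∉ I := fun h =>
    hP0 (Polynomial.leadingCoeff_eq_zero.1 (independentMod_iff.1 hJ.independentMod _ h))
  have hdeg : P.natDegree ≠ 0 := by
    intro h
    rw [Polynomial.eq_C_of_natDegree_eq_zero h, substVar_C] at hPI
    rw [Polynomial.leadingCoeff, h] at hlead
    exact hlead hPI
  refine ⟨P, hPI, hlead, fun h => ?_⟩
  rw [pderiv_substVar_self hi] at h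
  exact (Polynomial.natDegree_derivative_lt hdeg).not_ge
    (Function.argminOn_le Polynomial.natDegree A
      ⟨fun h0 => hdeg (Polynomial.derivative_eq_zero.1 h0), h⟩)

end Independence

section Elimination

variable {ι : Type*} {K : Ideal (MvPolynomial ι ℝ)} {J : Finset ι}

lemma exists_eval₂_mem_of_forall_substVar_mem
    (hK : ∀ i ∉ J, ∃ P : Polynomial (MvPolynomial J ℝ), P ≠ 0 ∧ substVar J i P ∈ K)
    (h : MvPolynomial ι ℝ) :
    ∃ P : Polynomial (MvPolynomial J ℝ), P ≠ 0 ∧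
      P.eval₂ (MvPolynomial.rename (Subtype.val : J → ι)).toRingHom h ∈ K := by
  let _ : Algebra (MvPolynomial J ℝ) (MvPolynomial ι ℝ ⧸ K) :=
    ((Ideal.Quotient.mk K).comp
      (MvPolynomial.rename (Subtype.val : J → ι)).toRingHom).toAlgebra
  have haeval : ∀ (P : Polynomial (MvPolynomial J ℝ)) (f : MvPolynomial ι ℝ),
      P.aeval (Ideal.Quotient.mk K f) = 0 ↔
        P.eval₂ (MvPolynomial.rename (Subtype.val : J → ι)).toRingHom f ∈ K := fun P f => by
    rw [← Ideal.Quotient.eq_zero_iff_mem, Polynomial.hom_eval₂]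
    rfl
  suffices IsAlgebraic (MvPolynomial J ℝ) (Ideal.Quotient.mk K h) by
    simpa only [IsAlgebraic, haeval] using this
  induction h using MvPolynomial.induction_on with
  | C a => exact MvPolynomial.rename_C (R := ℝ) (Subtype.val : J → ι) a ▸ isAlgebraic_algebraMap _
  | add p q hp hq => exact map_add (Ideal.Quotient.mk K) p q ▸ hp.add hq
  | mul_X p i hp =>
    refine map_mul (Ideal.Quotient.mk K) p _ ▸ hp.mul ?_
    by_cases hi : i ∈ J
    · exact MvPolynomial.rename_X (R := ℝ) (Subtype.val : J → ι) ⟨i, hi⟩ ▸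
        isAlgebraic_algebraMap _
    · obtain ⟨P, hP0, hP⟩ := hK i hi
      exact ⟨P, hP0, (haeval P _).2 hP⟩

lemma exists_pow_mul_eval₂_mem
    (hK : ∀ i ∉ J, ∃ P : Polynomial (MvPolynomial J ℝ), P ≠ 0 ∧ substVar J i P ∈ K)
    (h : MvPolynomial ι ℝ) :
    ∃ (k : ℕ) (Q : Polynomial (MvPolynomial J ℝ)), Q.coeff 0 ≠ 0 ∧
      h ^ k * Q.eval₂ (MvPolynomial.rename (Subtype.val : J → ι)).toRingHom h ∈ K := by
  obtain ⟨P, hP0, hP⟩ := exists_eval₂_mem_of_forall_substVar_mem hK h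
  obtain ⟨Q, hQ, hdvd⟩ := P.exists_eq_pow_rootMultiplicity_mul_and_not_dvd hP0 0
  rw [map_zero, sub_zero] at hQ hdvd
  refine ⟨P.rootMultiplicity 0, Q, fun h0 => hdvd (Polynomial.X_dvd_iff.2 h0), ?_⟩
  rwa [hQ, Polynomial.eval₂_mul, Polynomial.eval₂_X_pow] at hP

end Elimination

section Generic

variable {ι : Type*} {I K : Ideal (MvPolynomial ι ℝ)}

/-- The filter of the sets that contain the complement of the zero set of some polynomial outside
the prime ideal `I`: the properties that hold generically on the variety of `I`. -/
def genericFilter (I : Ideal (MvPolynomial ι ℝ)) [hI : I.IsPrime] : Filter (ι → ℝ) where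
  sets := {U | ∃ G ∉ I, ∀ p, MvPolynomial.eval p G ≠ 0 → p ∈ U}
  univ_sets := ⟨1, hI.one_notMem, fun _ _ => mem_univ _⟩
  sets_of_superset := fun ⟨G, hG, hU⟩ hUV => ⟨G, hG, fun p hp => hUV (hU p hp)⟩
  inter_sets := fun ⟨G, hG, hU⟩ ⟨H, hH, hV⟩ => ⟨G * H, hI.mul_notMem hG hH, fun p hp => by
    rw [map_mul] at hp
    exact ⟨hU p (left_ne_zero_of_mul hp), hV p (right_ne_zero_of_mul hp)⟩⟩

lemma eventually_genericFilter_iff [I.IsPrime] {Q : (ι → ℝ) → Prop} :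
    (∀ᶠ p in genericFilter I, Q p) ↔ ∃ G ∉ I, ∀ p, MvPolynomial.eval p G ≠ 0 → Q p :=
  Iff.rfl

lemma eventually_genericFilter_eval_ne_zero [I.IsPrime] {G : MvPolynomial ι ℝ} (hG : G ∉ I) :
    ∀ᶠ p in genericFilter I, MvPolynomial.eval p G ≠ 0 :=
  ⟨G, hG, fun _ => id⟩

lemma exists_mem_of_eventually_genericFilter {S : Set (ι → ℝ)}
    [(MvPolynomial.vanishingIdeal ℝ S).IsPrime] {Q : (ι → ℝ) → Prop}
    (h : ∀ᶠ p in genericFilter (MvPolynomial.vanishingIdeal ℝ S), Q p) : ∃ p ∈ S, Q p := by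
  obtain ⟨G, hG, hQ⟩ := h
  simp only [MvPolynomial.mem_vanishingIdeal_iff, MvPolynomial.aeval_eq_eval, not_forall] at hG
  obtain ⟨p, hpS, hp⟩ := hG
  exact ⟨p, hpS, hQ p hp⟩

lemma eventually_genericFilter_eventually_mem [Fintype ι] [I.IsPrime] {J : Finset ι}
    (hJ : IndependentMod I J)
    (hK : ∀ i ∉ J, ∃ P : Polynomial (MvPolynomial J ℝ), P ≠ 0 ∧ substVar J i P ∈ K)
    {S : Set (ι → ℝ)} (hS : IsSemialgebraic S) :
    ∀ᶠ p in genericFilter I, p ∈ S → ∀ᶠ z in 𝓝[MvPolynomial.zeroLocus ℝ K] p, z ∈ S := by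
  induction hS with
  | eq h =>
    obtain ⟨k, Q, hQ, hK⟩ := exists_pow_mul_eval₂_mem hK h
    filter_upwards [eventually_genericFilter_eval_ne_zero
      (mt (independentMod_iff.1 hJ (Q.coeff 0)) hQ)] with p hp hpS
    have hpg : MvPolynomial.eval p
        (Q.eval₂ (MvPolynomial.rename (Subtype.val : J → ι)).toRingHom h) ≠ 0 := by
      rwa [eval_eval₂_rename, show MvPolynomial.eval p h = 0 from hpS, Polynomial.eval₂_at_zero,
        ← eval_rename_val]
    filter_upwards [mem_nhdsWithin_of_mem_nhds
        ((MvPolynomial.continuous_eval _).continuousAt.eventually_ne hpg),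
      self_mem_nhdsWithin] with z hzg hzK
    have hz := hzK _ hK
    rw [MvPolynomial.aeval_eq_eval, map_mul, map_pow] at hz
    exact eq_zero_of_pow_eq_zero ((mul_eq_zero.1 hz).resolve_right hzg)
  | lt h =>
    refine Eventually.of_forall fun p hp => mem_nhdsWithin_of_mem_nhds ?_
    exact (MvPolynomial.continuous_eval h).continuousAt.eventually_const_lt hp
  | union _ _ ihA ihB =>
    filter_upwards [ihA, ihB] with p hA hB hp
    exact hp.elim (fun h => (hA h).mono fun _ => Or.inl) fun h => (hB h).mono fun _ => Or.inr
  | inter _ _ ihA ihB =>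
    filter_upwards [ihA, ihB] with p hA hB hp using (hA hp.1).and (hB hp.2)

end Generic

section LocalSection

variable {ι : Type*} [Fintype ι] {J : Finset ι} {p : ι → ℝ} {S : Set (ι → ℝ)}

lemma exists_localInverse_polynomialMap {g : ι → MvPolynomial ι ℝ}
    (hinj : ∀ v, (∀ k, differential (g k) p v = 0) → v = 0) :
    ∃ Θ : (ι → ℝ) → ι → ℝ, Θ (fun k => MvPolynomial.eval p (g k)) = p ∧
      DifferentiableAt ℝ Θ (fun k => MvPolynomial.eval p (g k)) ∧
      ∀ᶠ y in 𝓝 fun k => MvPolynomial.eval p (g k),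
        ∀ k, MvPolynomial.eval (Θ y) (g k) = y k := by
  let D : (ι → ℝ) →L[ℝ] (ι → ℝ) := ContinuousLinearMap.pi fun k => differential (g k) p
  have hD : Function.Injective D :=
    (injective_iff_map_eq_zero D).2 fun v hv => hinj v fun k => congrFun hv k
  let e : (ι → ℝ) ≃L[ℝ] (ι → ℝ) :=
    (LinearEquiv.ofInjectiveEndo D.toLinearMap hD).toContinuousLinearEquiv
  have hstrict : HasStrictFDerivAt (fun z k => MvPolynomial.eval z (g k))
      (e : (ι → ℝ) →L[ℝ] (ι → ℝ)) p :=
    hasStrictFDerivAt_pi'.2 fun k => hasStrictFDerivAt_mvPolynomial_eval (g k) p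
  exact ⟨hstrict.localInverse, hstrict.localInverse_apply_image,
    hstrict.to_localInverse.hasFDerivAt.differentiableAt,
    hstrict.eventually_right_inverse.mono fun y hy => congrFun hy⟩

/-- `σ` is, near the image of `p`, a section of the projection of `S` to the coordinates with index
in `J` that passes through `p` and is differentiable there. -/
structure IsLocalSection (S : Set (ι → ℝ)) (J : Finset ι) (p : ι → ℝ)
    (σ : (J → ℝ) → ι → ℝ) : Prop where
  apply_restrict : σ (J.restrict p) = p
  differentiableAt : DifferentiableAt ℝ σ (J.restrict p)
  eventually_mem : ∀ᶠ y in 𝓝 (J.restrict p), σ y ∈ S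
  eventually_restrict : ∀ᶠ y in 𝓝 (J.restrict p), J.restrict (σ y) = y

/-- The Zariski tangent space at `p` of the variety of `I`. -/
noncomputable def zariskiTangentSpace (I : Ideal (MvPolynomial ι ℝ)) (p : ι → ℝ) :
    Submodule ℝ (ι → ℝ) :=
  ⨅ Q ∈ I, (differential Q p).ker

lemma mem_zariskiTangentSpace_iff {I : Ideal (MvPolynomial ι ℝ)} {v : ι → ℝ} :
    v ∈ zariskiTangentSpace I p ↔ ∀ Q ∈ I, differential Q p v = 0 := by
  simp [zariskiTangentSpace]

omit [Fintype ι] in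
lemma exists_isLocalSection_zeroLocus [Finite ι] {f : ι → MvPolynomial ι ℝ}
    (hf : ∀ i ∉ J, ∀ k ∉ J, k ≠ i → MvPolynomial.pderiv k (f i) = 0)
    (hzero : ∀ i ∉ J, MvPolynomial.eval p (f i) = 0)
    (hderiv : ∀ i ∉ J, MvPolynomial.eval p (MvPolynomial.pderiv i (f i)) ≠ 0) :
    ∃ σ, IsLocalSection (MvPolynomial.zeroLocus ℝ (Ideal.span (f '' (J : Set ι)ᶜ))) J p σ := by
  classical
  cases nonempty_fintype ι
  let g : ι → MvPolynomial ι ℝ := fun k => if k ∈ J then MvPolynomial.X k else f k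
  have hgJ : ∀ k ∈ J, g k = MvPolynomial.X k := fun k hk => if_pos hk
  have hgf : ∀ k ∉ J, g k = f k := fun k hk => if_neg hk
  obtain ⟨Θ, hΘp, hΘ, hright⟩ := exists_localInverse_polynomialMap (p := p) (g := g) fun v hv => by
    have hvJ : ∀ j ∈ J, v j = 0 := fun j hj => by
      simpa [hgJ j hj, differential_apply, MvPolynomial.pderiv_X, Pi.single_apply] using hv j
    funext k
    by_cases hk : k ∈ J
    · exact hvJ k hk
    · have hvk := hv k
      rw [hgf k hk, differential_apply_eq_add_sum hk (hf k hk),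
        Finset.sum_eq_zero fun j _ => by rw [hvJ j j.2, mul_zero], add_zero] at hvk
      exact (mul_eq_zero.1 hvk).resolve_left (hderiv k hk)
  let ext : (J → ℝ) →L[ℝ] (ι → ℝ) :=
    (Function.ExtendByZero.linearMap ℝ (Subtype.val : J → ι)).toContinuousLinearMap
  have hextJ : ∀ y (j : J), ext y j = y j := fun y => Subtype.val_injective.extend_apply y 0
  have hext : ∀ y, ∀ k ∉ J, ext y k = 0 := fun y k hk =>
    Function.extend_apply' y (0 : ι → ℝ) k fun ⟨j, hj⟩ => hk (hj ▸ j.2)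
  have hpext : ext (J.restrict p) = fun k => MvPolynomial.eval p (g k) := by
    funext k
    by_cases hk : k ∈ J
    · rw [hgJ k hk, MvPolynomial.eval_X]
      exact hextJ _ ⟨k, hk⟩
    · rw [hext _ k hk, hgf k hk, hzero k hk]
  rw [← hpext] at hΘp hΘ hright
  replace hright := ext.continuous.continuousAt.eventually hright
  refine ⟨Θ ∘ ext, hΘp, hΘ.comp _ ext.differentiableAt, hright.mono fun y hy => ?_,
    hright.mono fun y hy => funext fun j => ?_⟩
  · rw [MvPolynomial.zeroLocus_span]
    rintro _ ⟨i, hi, rfl⟩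
    rw [MvPolynomial.aeval_eq_eval, ← hgf i hi]
    exact (hy i).trans (hext y i hi)
  · simpa [hgJ j j.2, hextJ] using hy j

namespace IsLocalSection

variable {σ : (J → ℝ) → ι → ℝ}

omit [Fintype ι] in
lemma of_eventually_mem {T : Set (ι → ℝ)} (hσ : IsLocalSection T J p σ)
    (hS : ∀ᶠ z in 𝓝[T] p, z ∈ S) : IsLocalSection S J p σ where
  apply_restrict := hσ.apply_restrict
  differentiableAt := hσ.differentiableAt
  eventually_mem := by
    have hσp : Tendsto σ (𝓝 (J.restrict p)) (𝓝[T] p) :=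
      tendsto_nhdsWithin_iff.2
        ⟨by simpa only [hσ.apply_restrict] using hσ.differentiableAt.continuousAt.tendsto,
          hσ.eventually_mem⟩
    exact hσp.eventually hS
  eventually_restrict := hσ.eventually_restrict

lemma card_le_dimH (hσ : IsLocalSection S J p σ) :
    J.card ≤ dimH (WithLp.ofLp ⁻¹' S : Set (EuclideanSpace ℝ ι)) := by
  let π : EuclideanSpace ℝ ι →L[ℝ] (J → ℝ) :=
    ContinuousLinearMap.pi fun j => EuclideanSpace.proj (j : ι)
  have hnhds : π '' (WithLp.ofLp ⁻¹' S) ∈ 𝓝 (J.restrict p) := by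
    filter_upwards [hσ.eventually_mem, hσ.eventually_restrict] with y hy hyσ
    exact ⟨WithLp.toLp 2 (σ y), hy, hyσ⟩
  calc (J.card : ℝ≥0∞) = dimH (π '' (WithLp.ofLp ⁻¹' S)) := by
        simp [Real.dimH_of_mem_nhds hnhds]
    _ ≤ dimH (WithLp.ofLp ⁻¹' S) := π.lipschitz.dimH_image_le _

omit [Fintype ι] in
lemma restrict_fderiv [Finite ι] (hσ : IsLocalSection S J p σ) (u : J → ℝ) :
    J.restrict (fderiv ℝ σ (J.restrict p) u) = u := by
  cases nonempty_fintype ι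
  let π : (ι → ℝ) →L[ℝ] (J → ℝ) :=
    ContinuousLinearMap.pi fun j => ContinuousLinearMap.proj (j : ι)
  have hcomp := π.hasFDerivAt.comp (J.restrict p) hσ.differentiableAt.hasFDerivAt
  exact DFunLike.congr_fun (hcomp.unique
    ((hasFDerivAt_id (𝕜 := ℝ) _).congr_of_eventuallyEq hσ.eventually_restrict)) u

lemma fderiv_mem_zariskiTangentSpace (hσ : IsLocalSection S J p σ) (u : J → ℝ) :
    fderiv ℝ σ (J.restrict p) u ∈
      zariskiTangentSpace (MvPolynomial.vanishingIdeal ℝ S) p := by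
  refine mem_zariskiTangentSpace_iff.2 fun Q hQ => ?_
  have hQp := (hasStrictFDerivAt_mvPolynomial_eval Q p).hasFDerivAt
  rw [← hσ.apply_restrict] at hQp
  have hcomp := hQp.comp (J.restrict p) hσ.differentiableAt.hasFDerivAt
  have hzero : (fun z => MvPolynomial.eval z Q) ∘ σ =ᶠ[𝓝 (J.restrict p)] fun _ => 0 :=
    hσ.eventually_mem.mono fun y hy => hQ _ hy
  have := DFunLike.congr_fun
    (hcomp.unique ((hasFDerivAt_const (𝕜 := ℝ) (0 : ℝ) _).congr_of_eventuallyEq hzero)) u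
  rwa [hσ.apply_restrict] at this

end IsLocalSection

end LocalSection

section Auerbach

variable {ι κ : Type*} [Fintype κ] [DecidableEq κ]

lemma mul_inv_apply_mul_det (M : Matrix ι κ ℝ) {f : κ → ι} (hf : (M.submatrix f id).det ≠ 0)
    (k : ι) (a : κ) :
    (M * (M.submatrix f id)⁻¹) k a * (M.submatrix f id).det =
      (M.submatrix (Function.update f a k) id).det := by
  have hupdate : M.submatrix (Function.update f a k) id = (M.submatrix f id).updateRow a (M k) := by
    ext b l
    obtain rfl | hb := eq_or_ne b a
    · simp
    · simp [hb]
  rw [hupdate, ← Matrix.cramer_transpose_apply, Matrix.cramer_eq_adjugate_mulVec,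
    ← Matrix.adjugate_transpose, Matrix.mulVec_transpose, Matrix.inv_def]
  simp only [Ring.inverse_eq_inv', Matrix.mul_smul, Matrix.smul_apply, smul_eq_mul]
  rw [Matrix.vecMul, Matrix.mul_apply, dotProduct]
  field_simp

lemma exists_submatrix_abs_mul_inv_le_one [Finite ι] {M : Matrix ι κ ℝ} {f₀ : κ → ι}
    (hf₀ : (M.submatrix f₀ id).det ≠ 0) :
    ∃ f : κ → ι, (M.submatrix f id).det ≠ 0 ∧
      ∀ k a, |(M * (M.submatrix f id)⁻¹) k a| ≤ 1 := by
  have : Nonempty (κ → ι) := ⟨f₀⟩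
  obtain ⟨f, hf⟩ := Finite.exists_max fun f : κ → ι => |(M.submatrix f id).det|
  have hpos : 0 < |(M.submatrix f id).det| := (abs_pos.2 hf₀).trans_le (hf f₀)
  refine ⟨f, abs_pos.1 hpos, fun k a => le_of_mul_le_mul_right ?_ hpos⟩
  rw [← abs_mul, mul_inv_apply_mul_det M (abs_pos.1 hpos), one_mul]
  exact hf _

lemma exists_finset_restrict_eq_single_abs_le_one [Finite ι] [DecidableEq ι] {J : Finset ι}
    {T : Submodule ℝ (ι → ℝ)} (hT : ∀ l : J, ∃ w ∈ T, J.restrict w = Pi.single l 1) :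
    ∃ J' : Finset ι, J'.card = J.card ∧
      ∀ j : J', ∃ w ∈ T, J'.restrict w = Pi.single j 1 ∧ ∀ k, |w k| ≤ 1 := by
  choose B hBT hB using hT
  let M : Matrix ι J ℝ := Matrix.of fun k l => B l k
  have hM : M.submatrix (Subtype.val : J → ι) id = 1 := by
    ext a b
    simpa [M, Matrix.one_apply, Pi.single_apply] using congrFun (hB b) a
  obtain ⟨f, hdet, hle⟩ := exists_submatrix_abs_mul_inv_le_one (M := M)
    (f₀ := Subtype.val) (by rw [hM, Matrix.det_one]; exact one_ne_zero)
  have hinj : Function.Injective f := fun a b hab => by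
    by_contra hne
    exact hdet (Matrix.det_zero_of_row_eq hne (by ext l; simp [hab]))
  refine ⟨Finset.univ.image f, by simp [Finset.card_image_of_injective _ hinj], ?_⟩
  rintro ⟨j, hj⟩
  obtain ⟨a, -, rfl⟩ := Finset.mem_image.1 hj
  refine ⟨fun k => (M * (M.submatrix f id)⁻¹) k a, ?_, funext ?_, fun k => hle k a⟩
  · have hsum : (fun k => (M * (M.submatrix f id)⁻¹) k a) =
        ∑ l, (M.submatrix f id)⁻¹ l a • B l := by
      funext k
      simp [Matrix.mul_apply, M, mul_comm]
    exact hsum ▸ T.sum_mem fun l _ => T.smul_mem _ (hBT l)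
  · rintro ⟨j', hj'⟩
    obtain ⟨b, -, rfl⟩ := Finset.mem_image.1 hj'
    have hone : (M * (M.submatrix f id)⁻¹) (f b) a = (1 : Matrix J J ℝ) b a := by
      rw [← Matrix.mul_nonsing_inv (M.submatrix f id) hdet.isUnit]
      rfl
    rw [Pi.single_apply]
    exact hone.trans (Matrix.one_apply.trans
      (if_congr (Subtype.mk_eq_mk.trans hinj.eq_iff).symm rfl rfl))

end Auerbach

section BoundedSlopes

variable {ι : Type*} [Fintype ι] {J : Finset ι} {S E : Set (ι → ℝ)} {f : ι → MvPolynomial ι ℝ}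

lemma exists_one_lt_pow_le_and_mul_lt (d : ℕ) (N : ℝ) {C : ℝ≥0} (hC : 1 < C) :
    ∃ K : ℝ≥0, 1 < K ∧ K ^ d ≤ C ∧ ∃ δ > 0, N * δ < 1 - (K : ℝ)⁻¹ := by
  have hpow : ∀ᶠ K : ℝ≥0 in 𝓝[>] 1, K ^ d ≤ C :=
    nhdsWithin_le_nhds <| (continuous_pow d).continuousAt.eventually_le_const <| by simpa
  obtain ⟨K, hKC, hK⟩ := (hpow.and self_mem_nhdsWithin).exists
  have hpos : 0 < 1 - (K : ℝ)⁻¹ := sub_pos.2 (inv_lt_one_of_one_lt₀ (NNReal.one_lt_coe.2 hK))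
  have hmul : ∀ᶠ δ : ℝ in 𝓝[>] 0, N * δ < 1 - (K : ℝ)⁻¹ :=
    nhdsWithin_le_nhds <| (continuous_const_mul N).continuousAt.eventually_lt_const <|
      (mul_zero N).trans_lt hpos
  obtain ⟨δ, hδ, hδ0⟩ := (hmul.and self_mem_nhdsWithin).exists
  exact ⟨K, hK, hKC, δ, hδ0, hδ⟩

/-- The points at which, for `i ∉ J`, the partial derivatives of `f i` at the coordinates in `J`
agree with those of a multiple of `x i - ∑ j, L i j * x j`, up to a relative error `δ`. -/
def slopesNear (f : ι → MvPolynomial ι ℝ) (L : ι → J → ℝ) (δ : ℝ) : Set (ι → ℝ) :=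
  {z | ∀ i ∉ J, ∀ j : J,
    |MvPolynomial.eval z (MvPolynomial.pderiv (j : ι) (f i)) +
      L i j * MvPolynomial.eval z (MvPolynomial.pderiv i (f i))| ≤
    |δ * MvPolynomial.eval z (MvPolynomial.pderiv i (f i))|}

lemma isSemialgebraic_slopesNear (f : ι → MvPolynomial ι ℝ) (L : ι → J → ℝ) (δ : ℝ) :
    IsSemialgebraic (slopesNear f L δ) := by
  have h := IsSemialgebraic.biInter (Set.toFinite {i | i ∉ J}) fun i _ =>
    IsSemialgebraic.biInter (Set.finite_univ (α := J)) fun j _ =>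
      IsSemialgebraic.abs_le (MvPolynomial.pderiv (j : ι) (f i) +
        MvPolynomial.C (L i j) * MvPolynomial.pderiv i (f i))
        (MvPolynomial.C δ * MvPolynomial.pderiv i (f i))
  convert h using 1
  ext z
  simp [slopesNear]

lemma exists_mem_slopesNear {A : Set (ι → J → ℝ)} {δ : ℝ}
    (hA : closedBall 0 1 ⊆ ⋃ L ∈ A, ball L δ) (hδ : 0 < δ) {z : ι → ℝ}
    (hderiv : ∀ i ∉ J, MvPolynomial.eval z (MvPolynomial.pderiv i (f i)) ≠ 0)
    (hle : ∀ i ∉ J, ∀ j : J, |MvPolynomial.eval z (MvPolynomial.pderiv (j : ι) (f i))| ≤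
      |MvPolynomial.eval z (MvPolynomial.pderiv i (f i))|) :
    ∃ L ∈ A, z ∈ slopesNear f L δ := by
  classical
  let slope : ι → J → ℝ := fun i j => if i ∈ J then 0 else
    -(MvPolynomial.eval z (MvPolynomial.pderiv (j : ι) (f i)) /
      MvPolynomial.eval z (MvPolynomial.pderiv i (f i)))
  have hslope : slope ∈ closedBall (0 : ι → J → ℝ) 1 := by
    rw [mem_closedBall_zero_iff, pi_norm_le_iff_of_nonneg zero_le_one]
    refine fun i => (pi_norm_le_iff_of_nonneg zero_le_one).2 fun j => ?_
    by_cases hi : i ∈ J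
    · simp [slope, hi]
    · simpa [slope, hi, abs_div] using div_le_one_of_le₀ (hle i hi j) (abs_nonneg _)
  obtain ⟨L, hL, hLslope⟩ := mem_iUnion₂.1 (hA hslope)
  refine ⟨L, hL, fun i hi j => ?_⟩
  have hdist : |L i j - slope i j| ≤ δ := by
    rw [abs_sub_comm]
    exact ((dist_le_pi_dist (slope i) (L i) j).trans (dist_le_pi_dist slope L i)).trans hLslope.le
  have heq : MvPolynomial.eval z (MvPolynomial.pderiv (j : ι) (f i)) +
      L i j * MvPolynomial.eval z (MvPolynomial.pderiv i (f i)) =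
      (L i j - slope i j) * MvPolynomial.eval z (MvPolynomial.pderiv i (f i)) := by
    have := hderiv i hi
    simp only [slope, if_neg hi]
    field_simp
    ring
  rw [heq, abs_mul, abs_mul, abs_of_pos hδ]
  exact mul_le_mul_of_nonneg_right hdist (abs_nonneg _)

lemma densityConverges_of_abs_pderiv_le
    (hf : ∀ i ∉ J, ∀ k ∉ J, k ≠ i → MvPolynomial.pderiv k (f i) = 0)
    (hE : IsSemialgebraic E) (hEJ : IsAlgebraicOver J E)
    (hzero : ∀ z ∈ E, ∀ i ∉ J, MvPolynomial.eval z (f i) = 0)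
    (hderiv : ∀ z ∈ E, ∀ i ∉ J, MvPolynomial.eval z (MvPolynomial.pderiv i (f i)) ≠ 0)
    (hle : ∀ z ∈ E, ∀ i ∉ J, ∀ j : J, |MvPolynomial.eval z (MvPolynomial.pderiv (j : ι) (f i))| ≤
      |MvPolynomial.eval z (MvPolynomial.pderiv i (f i))|)
    {d : ℕ} (hd : J.card ≤ d) {C : ℝ≥0} (hC : 1 < C) : DensityConverges d C E := by
  obtain ⟨K, hK, hKC, δ, hδ, hδK⟩ :=
    exists_one_lt_pow_le_and_mul_lt d (Fintype.card ι * J.card) hC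
  obtain ⟨A, -, hA, hcover⟩ := (isCompact_closedBall (0 : ι → J → ℝ) 1).finite_cover_balls hδ
  refine (DensityConverges.biUnion hA (S := fun L => E ∩ slopesNear f L δ)
    (fun L _ => hE.inter (isSemialgebraic_slopesNear f L δ)) fun L _ T hT hTsa => ?_).mono
      fun z hz => ?_
  · have hloc := locallyBilipschitzOnWith_graphProj_slopeGraph (L := L) hf hK.le hδ.le
      (by rwa [← mul_assoc]) (fun z hz => hzero z hz.1) (fun z hz => hderiv z hz.1)
      fun z (hz : z ∈ E ∩ slopesNear f L δ) i hi j => by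
        simpa [abs_mul, abs_of_pos hδ] using hz.2 i hi j
    have hgraph :=
      densityConverges_of_graph restrict_slopeGraph (hEJ.mono inter_subset_left) hloc hd
    exact (hgraph T hT hTsa).mono hKC
  · obtain ⟨L, hL, hzL⟩ := exists_mem_slopesNear hcover hδ (hderiv z hz) (hle z hz)
    exact mem_biUnion hL ⟨hz, hzL⟩

end BoundedSlopes

section Generic

variable {ι : Type*} [Fintype ι] {I : Ideal (MvPolynomial ι ℝ)} {J : Finset ι} {S E : Set (ι → ℝ)}

lemma abs_eval_pderiv_le_of_mem_zariskiTangentSpace [DecidableEq ι] {f : MvPolynomial ι ℝ} {i : ι}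
    {p w : ι → ℝ} {j : J} (hi : i ∉ J) (hf : ∀ k ∉ J, k ≠ i → MvPolynomial.pderiv k f = 0)
    (hfI : f ∈ I) (hw : w ∈ zariskiTangentSpace I p) (hwJ : J.restrict w = Pi.single j 1)
    (hwi : |w i| ≤ 1) :
    |MvPolynomial.eval p (MvPolynomial.pderiv (j : ι) f)| ≤
      |MvPolynomial.eval p (MvPolynomial.pderiv i f)| := by
  have hdiff := mem_zariskiTangentSpace_iff.1 hw f hfI
  have hwJ' : ∀ k : J, w k = (Pi.single j 1 : J → ℝ) k := congrFun hwJ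
  simp only [differential_apply_eq_add_sum hi hf, hwJ', Pi.single_apply, mul_ite, mul_one,
    mul_zero, Finset.sum_ite_eq', Finset.mem_univ, if_true] at hdiff
  rw [eq_neg_of_add_eq_zero_right hdiff, abs_neg, abs_mul]
  exact mul_le_of_le_one_right (abs_nonneg _) hwi

omit [Fintype ι] in
lemma eventually_genericFilter_eval_ne_zero_of_isSeparableRelation [Finite ι] [I.IsPrime]
    {P : ι → Polynomial (MvPolynomial J ℝ)} (hP : ∀ i ∉ J, IsSeparableRelation I J i (P i)) :
    ∀ᶠ p in genericFilter I, ∀ i ∉ J,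
      MvPolynomial.eval (J.restrict p) (P i).leadingCoeff ≠ 0 ∧
        MvPolynomial.eval p (MvPolynomial.pderiv i (substVar J i (P i))) ≠ 0 := by
  refine eventually_all.2 fun i => eventually_imp_distrib_left.2 fun hi => ?_
  filter_upwards [eventually_genericFilter_eval_ne_zero (hP i hi).leadingCoeff_notMem,
    eventually_genericFilter_eval_ne_zero (hP i hi).pderiv_notMem] with p hlead hderiv
  exact ⟨by rwa [eval_rename_val] at hlead, hderiv⟩

lemma eventually_genericFilter_independentMod [DecidableEq ι] [I.IsPrime] (J : Finset ι) :
    ∀ᶠ p in genericFilter I,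
      (∀ j : J, ∃ w ∈ zariskiTangentSpace I p, J.restrict w = Pi.single j 1) →
        IndependentMod I J := by
  by_cases hJ : IndependentMod I J
  · exact .of_forall fun _ _ => hJ
  obtain ⟨Q, j, hQ, hderiv⟩ :=
    exists_pderiv_notMem_of_not_independentMod (Ideal.IsPrime.ne_top ‹_›) hJ
  filter_upwards [eventually_genericFilter_eval_ne_zero hderiv] with p hp htan
  obtain ⟨w, hw, hwJ⟩ := htan j
  have hdiff := mem_zariskiTangentSpace_iff.1 hw _ hQ
  rw [differential_apply, Finset.sum_eq_single (j : ι)] at hdiff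
  · have hwj : w j = 1 := by simpa using congrFun hwJ j
    exact absurd hdiff (by rwa [hwj, mul_one])
  · intro k _ hkj
    by_cases hk : k ∈ J
    · have hwk : w k = 0 := by
        simpa [Pi.single_apply, Subtype.ext_iff, hkj] using congrFun hwJ ⟨k, hk⟩
      rw [hwk, mul_zero]
    · rw [pderiv_rename_val_eq_zero hk, map_zero, zero_mul]
  · exact fun h => absurd (Finset.mem_univ _) h

variable [(MvPolynomial.vanishingIdeal ℝ S).IsPrime]

lemma eventually_genericFilter_exists_isLocalSection (hS : IsSemialgebraic S)
    (hJ : IsMaxIndependentMod (MvPolynomial.vanishingIdeal ℝ S) J) :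
    ∀ᶠ p in genericFilter (MvPolynomial.vanishingIdeal ℝ S),
      p ∈ S → ∃ σ, IsLocalSection S J p σ := by
  choose! P hP using fun i (hi : i ∉ J) => hJ.exists_isSeparableRelation hi
  let f : ι → MvPolynomial ι ℝ := fun i => substVar J i (P i)
  have hK : ∀ i ∉ J, ∃ P : Polynomial (MvPolynomial J ℝ),
      P ≠ 0 ∧ substVar J i P ∈ Ideal.span (f '' (J : Set ι)ᶜ) := fun i hi =>
    ⟨P i, fun h => (hP i hi).leadingCoeff_notMem (by simp [h]),
      Ideal.subset_span (mem_image_of_mem f hi)⟩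
  filter_upwards [eventually_genericFilter_eval_ne_zero_of_isSeparableRelation hP,
    eventually_genericFilter_eventually_mem hJ.independentMod hK hS] with p hp hmem hpS
  obtain ⟨σ, hσ⟩ := exists_isLocalSection_zeroLocus (f := f)
    (fun i _ k hk hki => pderiv_substVar_eq_zero hk hki (P i))
    (fun i hi => (hP i hi).mem p hpS) fun i hi => (hp i hi).2
  exact ⟨σ, hσ.of_eventually_mem (hmem hpS)⟩

lemma IsMaxIndependentMod.card_le_dimH (hS : IsSemialgebraic S)
    (hJ : IsMaxIndependentMod (MvPolynomial.vanishingIdeal ℝ S) J) :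
    J.card ≤ dimH (WithLp.ofLp ⁻¹' S : Set (EuclideanSpace ℝ ι)) := by
  obtain ⟨p, hpS, hσ⟩ :=
    exists_mem_of_eventually_genericFilter (eventually_genericFilter_exists_isLocalSection hS hJ)
  exact (hσ hpS).choose_spec.card_le_dimH

lemma eventually_genericFilter_exists_tangent_abs_le_one [DecidableEq ι] (hS : IsSemialgebraic S) :
    ∀ᶠ p in genericFilter (MvPolynomial.vanishingIdeal ℝ S), p ∈ S →
      ∃ J, IsMaxIndependentMod (MvPolynomial.vanishingIdeal ℝ S) J ∧
        ∀ j : J, ∃ w ∈ zariskiTangentSpace (MvPolynomial.vanishingIdeal ℝ S) p,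
          J.restrict w = Pi.single j 1 ∧ ∀ k, |w k| ≤ 1 := by
  obtain ⟨J₀, hJ₀⟩ := exists_isMaxIndependentMod
    (Ideal.IsPrime.ne_top (I := MvPolynomial.vanishingIdeal ℝ S) ‹_›)
  filter_upwards [eventually_genericFilter_exists_isLocalSection hS hJ₀,
    eventually_all.2 eventually_genericFilter_independentMod] with p hsection hindep hpS
  obtain ⟨σ, hσ⟩ := hsection hpS
  obtain ⟨J, hcard, hJ⟩ := exists_finset_restrict_eq_single_abs_le_one fun l : J₀ =>
    ⟨_, hσ.fderiv_mem_zariskiTangentSpace (Pi.single l 1), hσ.restrict_fderiv _⟩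
  exact ⟨J, hJ₀.of_card_eq (hindep J fun j => (hJ j).imp fun w hw => ⟨hw.1, hw.2.1⟩) hcard, hJ⟩

lemma exists_densityConverges_inter_ne_zero_of_isPrime (hS : IsSemialgebraic S) {d : ℕ}
    (hd : dimH (WithLp.ofLp ⁻¹' S : Set (EuclideanSpace ℝ ι)) ≤ d) {C : ℝ≥0} (hC : 1 < C) :
    ∃ G ∉ MvPolynomial.vanishingIdeal ℝ S,
      DensityConverges d C (S ∩ {z | MvPolynomial.eval z G ≠ 0}) := by
  classical
  let Basis := {J // IsMaxIndependentMod (MvPolynomial.vanishingIdeal ℝ S) J}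
  choose! P hP using fun (J : Basis) i (hi : i ∉ J.1) => J.2.exists_isSeparableRelation hi
  obtain ⟨G, hG, hgen⟩ := eventually_genericFilter_iff.1 <|
    (eventually_all.2 fun J => eventually_genericFilter_eval_ne_zero_of_isSeparableRelation
      (hP J)).and (eventually_genericFilter_exists_tangent_abs_le_one hS)
  let f : Basis → ι → MvPolynomial ι ℝ := fun J i => substVar J.1 i (P J i)
  have hf : ∀ J : Basis, ∀ i ∉ J.1, ∀ k ∉ J.1, k ≠ i → MvPolynomial.pderiv k (f J i) = 0 :=
    fun J i _ k hk hki => pderiv_substVar_eq_zero hk hki (P J i)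
  let piece : Basis → Set (ι → ℝ) := fun J =>
    (S \ {z | MvPolynomial.eval z G = 0}) ∩ slopesNear (J := J.1) (f J) 0 1
  have hpiece : ∀ J, IsSemialgebraic (piece J) := fun J =>
    (hS.diff (.eq G)).inter (isSemialgebraic_slopesNear _ _ _)
  refine ⟨G, hG, (DensityConverges.biUnion finite_univ (fun J _ => hpiece J)
    fun J _ => ?_).mono fun z hz => ?_⟩
  · have hzero : ∀ z ∈ piece J, ∀ i ∉ J.1, MvPolynomial.eval z (f J i) = 0 :=
      fun z hz i hi => (hP J i hi).mem z hz.1.1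
    refine densityConverges_of_abs_pderiv_le (hf J) (hpiece J) ?_ hzero
      (fun z hz i hi => ((hgen z hz.1.2).1 J i hi).2)
      (fun z hz i hi j => by simpa using hz.2 i hi j)
      (mod_cast (J.2.card_le_dimH hS).trans hd) hC
    exact IsAlgebraicOver.of_forall_notMem fun i hi => ⟨P J i, fun z hz =>
      ⟨(eval_substVar _ z).symm.trans (hzero z hz i hi), ((hgen z hz.1.2).1 J i hi).1⟩⟩
  · obtain ⟨J, hJ, htan⟩ := (hgen z hz.2).2 hz.1
    refine mem_biUnion (mem_univ (⟨J, hJ⟩ : Basis)) ⟨hz, fun i hi j => ?_⟩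
    obtain ⟨w, hw, hwJ, hle⟩ := htan j
    simpa using abs_eval_pderiv_le_of_mem_zariskiTangentSpace hi (hf ⟨J, hJ⟩ i hi)
      (hP ⟨J, hJ⟩ i hi).mem hw hwJ (hle i)

end Generic

section Structure

variable {ι : Type*} [Fintype ι] {S : Set (ι → ℝ)} {d : ℕ} {C : ℝ≥0}

theorem densityConverges_of_dimH_le (hC : 1 < C) (hS : IsSemialgebraic S)
    (hd : dimH (WithLp.ofLp ⁻¹' S : Set (EuclideanSpace ℝ ι)) ≤ d) : DensityConverges d C S := by
  induction hI : MvPolynomial.vanishingIdeal ℝ S using WellFoundedGT.induction generalizing S with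
  | ind I ih =>
    subst hI
    have hzeros : ∀ f ∉ MvPolynomial.vanishingIdeal ℝ S,
        DensityConverges d C (S ∩ {z | MvPolynomial.eval z f = 0}) := fun f hf =>
      ih _ (lt_of_le_of_ne (MvPolynomial.vanishingIdeal_anti_mono inter_subset_left)
          fun h => hf (h ▸ fun z hz => hz.2))
        (hS.inter (.eq f)) ((dimH_mono fun _ hv => hv.1).trans hd) rfl
    by_cases hprime : (MvPolynomial.vanishingIdeal ℝ S).IsPrime
    · obtain ⟨G, hG, hgen⟩ := exists_densityConverges_inter_ne_zero_of_isPrime hS hd hC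
      refine ((hzeros G hG).union (hS.inter (.eq G)) hgen).mono fun z hz => ?_
      exact (em (MvPolynomial.eval z G = 0)).imp (⟨hz, ·⟩) (⟨hz, ·⟩)
    obtain htop | ⟨f, hf, g, hg, hfg⟩ := Ideal.not_isPrime_iff.1 hprime
    · have hempty : S = ∅ := eq_empty_of_forall_notMem fun z hz => by
        simpa using (Ideal.eq_top_iff_one _).1 htop z hz
      exact hempty ▸ DensityConverges.empty
    · refine ((hzeros f hf).union (hS.inter (.eq f)) (hzeros g hg)).mono fun z hz => ?_
      have hprod := hfg z hz
      rw [MvPolynomial.aeval_eq_eval, map_mul] at hprod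
      exact (mul_eq_zero.1 hprod).imp (⟨hz, ·⟩) (⟨hz, ·⟩)

end Structure

section BallDensity

variable {V : Type*} [NormedAddCommGroup V] [MeasurableSpace V] [BorelSpace V] {d : ℕ} {X : Set V}
  {c : ℝ≥0∞}

lemma hausdorffMeasure_inter_closedBall_lt_top_of_tendsto_ballDensity (hc : c ≠ ∞)
    (h : Tendsto (ballDensity d X) atTop (𝓝 c)) (R : ℝ) : μH[d] (X ∩ closedBall 0 R) < ∞ := by
  obtain ⟨R', hfin, hRR'⟩ :=
    ((h.eventually_lt_const hc.lt_top).and (eventually_ge_atTop R)).exists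
  have hpow : ENNReal.ofReal R' ^ d ≠ ∞ := ENNReal.pow_ne_top ENNReal.ofReal_ne_top
  have hR' : μH[d] (X ∩ closedBall 0 R') < ∞ :=
    lt_top_iff_ne_top.2 fun htop => hfin.ne <| by
      rw [ballDensity, htop, ENNReal.top_div_of_ne_top hpow]
  exact (measure_mono (inter_subset_inter_right X (closedBall_subset_closedBall hRR'))).trans_lt hR'

lemma tendsto_toReal_hausdorffMeasure_inter_closedBall_div_pow (hc : c ≠ ∞)
    (h : Tendsto (ballDensity d X) atTop (𝓝 c)) :
    Tendsto (fun R => (μH[d] (X ∩ closedBall 0 R)).toReal / R ^ d) atTop (𝓝 c.toReal) := by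
  refine ((ENNReal.tendsto_toReal hc).comp h).congr' ?_
  filter_upwards [eventually_ge_atTop 0] with R hR
  simp [ballDensity, ENNReal.toReal_div, ENNReal.toReal_ofReal hR]

end BallDensity

theorem tendsto_hausdorffMeasure_inter_ball_div_rpow_general
    (n d : ℕ) (X : Set (EuclideanSpace ℝ (Fin n))) (hXsa : IsSemialgebraicE X) (hdim : dimH X ≤ d) :
    (∀ R, μH[d] (X ∩ closedBall 0 R) < ∞) ∧
      ∃ c : ℝ, Tendsto (fun R => (μH[d] (X ∩ closedBall 0 R)).toReal / R ^ d) atTop (𝓝 c) := by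
  obtain ⟨c, hc, hlim⟩ := exists_tendsto_of_forall_convergesUpToFactor fun C hC =>
    densityConverges_of_dimH_le (d := d) hC hXsa hdim _ subset_rfl hXsa
  exact ⟨hausdorffMeasure_inter_closedBall_lt_top_of_tendsto_ballDensity hc hlim, c.toReal,
    tendsto_toReal_hausdorffMeasure_inter_closedBall_div_pow hc hlim⟩

/-- Let `X ⊂ ℝ^n` be a nonempty closed semi-algebraic set of dimension `d`.
Then the limit `lim_{R→∞} vol_d(X ∩ B_R)/R^d` exists and is finite, where `vol_d` is the
`d`-dimensional Hausdorff measure and `B_R` the closed ball of radius `R` about the origin. -/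
theorem tendsto_hausdorffMeasure_inter_ball_div_rpow
    (n d : ℕ) (X : Set (EuclideanSpace ℝ (Fin n)))
    (hXne : X.Nonempty) (hXc : IsClosed X) (hXsa : IsSemialgebraicE X)
    (hdim : dimH X = (d : ℕ)) :
    ∃ c : ℝ, Tendsto
      (fun R : ℝ =>
        (μH[(d : ℝ)] (X ∩ closedBall (0 : EuclideanSpace ℝ (Fin n)) R)).toReal / R ^ d)
      atTop (𝓝 c) :=
  (tendsto_hausdorffMeasure_inter_ball_div_rpow_general n d X hXsa hdim.le).2
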